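/- Let −1 < α < 0 and u ∈ C_0^∞(ℝ³;ℝ³) with spherical-mean decomposition u = ū + v. Setting w(r) = (‖D_r ū‖_ω, ‖Dv‖_ω)ᵀ ∈ ℝ² for r > 0, one has ∫_{ℝ³}(Lu)·(Φu) dx ≥ (1/2)|u(0)|² + c_α ∫_0^∞ r · w(r)ᵀ B₋(α) w(r) dr. -/

import Mathlib

/-!
Divided by `c_α`, the integrand `(Lu) · (Φu)` differs from `|x|⁻¹ W(Du, x/|x|)`, with `W` a
quadratic form in `Du`, by the divergence of a field that is singular at the origin; the flux of
this field through small spheres produces the term `|u(0)|² / 2`. In polar coordinates what remains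
is an inequality on each sphere. There `Du = a ⊗ ω + H` with `a = D_r ū` and `H = Dv`, where `Hω`
has mean zero over the sphere, which removes the cross term of `|Du|²`. The matrix `B₋` then comes
from `∫ (a · ω)² dσ = 4π |a|² / 3`, the Cauchy-Schwarz inequality and pointwise bounds for
`W(H, ω)`.
-/

open MeasureTheory Metric Real Filter

noncomputable section

/-- `ℝ³` as Euclidean space. -/
abbrev E3 : Type := EuclideanSpace ℝ (Fin 3)

/-- Partial derivative `∂ᵢ f` on `ℝ³`. -/
def pd (i : Fin 3) (f : E3 → ℝ) (x : E3) : ℝ :=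
  fderiv ℝ f x (EuclideanSpace.single i 1)

/-- Laplacian on `ℝ³`. -/
def lap (f : E3 → ℝ) (x : E3) : ℝ := ∑ i, pd i (pd i f) x

/-- Divergence of a vector field on `ℝ³`. -/
def divg (u : E3 → Fin 3 → ℝ) (x : E3) : ℝ := ∑ k, pd k (fun y => u y k) x

/-- The 3D Lamé operator `(Lu)ᵢ = -Δuᵢ - α ∂ᵢ (div u)`. -/
def lame (α : ℝ) (u : E3 → Fin 3 → ℝ) (x : E3) (i : Fin 3) : ℝ :=
  - lap (fun y => u y i) x - α * pd i (divg u) x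

/-- The constant `c_α = (α+2)/(8π(α+1))`. -/
def cA (α : ℝ) : ℝ := (α + 2) / (8 * Real.pi * (α + 1))

/-- The fundamental matrix `Φ` of the 3D Lamé system:
`Φ_ij(x) = c_α |x|⁻¹ (δ_ij + (α/(α+2)) xᵢxⱼ/|x|²)`. -/
def Phi (α : ℝ) (x : E3) (i j : Fin 3) : ℝ :=
  cA α * ‖x‖⁻¹ * ((if i = j then (1 : ℝ) else 0) + (α / (α + 2)) * (x i * x j) / ‖x‖ ^ 2)

/-- `u ∈ C₀^∞(U; ℝ³)`: smooth, compactly supported, with support inside `U`. -/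
def IsTestOn (U : Set E3) (u : E3 → Fin 3 → ℝ) : Prop :=
  ContDiff ℝ (⊤ : ℕ∞) u ∧ HasCompactSupport u ∧ tsupport u ⊆ U

/-- `∫_{ℝ³} (Lu)·(Φ(·-y) u) dx`. -/
def lameEnergy (α : ℝ) (u : E3 → Fin 3 → ℝ) (y : E3) : ℝ :=
  ∫ x : E3, ∑ i, ∑ j, lame α u x i * Phi α (x - y) i j * u x j

/-- The surface measure on the unit sphere `S² ⊂ ℝ³` (total mass `4π`). -/
def sphMeas : Measure (sphere (0 : E3) 1) := volume.toSphere

/-- `∫_{S²} f(rω) dσ(ω)`. -/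
def sphInt (f : E3 → ℝ) (r : ℝ) : ℝ := ∫ ω : sphere (0 : E3) 1, f (r • (ω : E3)) ∂sphMeas

/-- `(ū, v)` is the spherical-mean decomposition of `u`:
`ūᵢ(r) = (1/(4π)) ∫_{S²} uᵢ(rω) dσ(ω)` and `uᵢ(x) = ūᵢ(|x|) + vᵢ(x)`. -/
def IsSphericalMeanDecomp (u : E3 → Fin 3 → ℝ) (ub : Fin 3 → ℝ → ℝ)
    (v : E3 → Fin 3 → ℝ) : Prop :=
  (∀ i r, ub i r = (1 / (4 * Real.pi)) * sphInt (fun x => u x i) r) ∧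
  (∀ x i, u x i = ub i ‖x‖ + v x i)

/-- The matrix `B₋(α)`. -/
def Bminus (α : ℝ) : Matrix (Fin 2) (Fin 2) ℝ :=
  !![1 + (α / 3) * ((2 * α + 3) / (α + 2)),
       (α / 2) * ((3 * α + 4) / (α + 2)) + α / (2 * Real.sqrt 3);
     (α / 2) * ((3 * α + 4) / (α + 2)) + α / (2 * Real.sqrt 3),
       1 + 3 * α + (α / (α + 2)) * (1 + (1 + Real.sqrt 3) / Real.sqrt 2 - Real.sqrt 3 * α)]

open scoped Matrix

/-! ### Polar coordinates -/

section PolarCoordinates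

variable {E F : Type*} [NormedAddCommGroup E] [NormedSpace ℝ E] [FiniteDimensional ℝ E]
  [MeasurableSpace E] [BorelSpace E] [NormedAddCommGroup F] {μ : Measure E} [μ.IsAddHaarMeasure]

lemma integrable_comp_smul_sphere_prod {g : E → F} (hg : Integrable g μ) :
    Integrable (fun p : sphere (0 : E) 1 × Set.Ioi (0 : ℝ) => g ((p.2 : ℝ) • (p.1 : E)))
      (μ.toSphere.prod (.volumeIoiPow (Module.finrank ℝ E - 1))) := by
  rw [← μ.measurePreserving_homeomorphUnitSphereProd.integrable_comp_emb
    (homeomorphUnitSphereProd E).measurableEmbedding]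
  refine ((integrableOn_iff_comap_subtypeVal (measurableSet_singleton 0).compl).1
    hg.integrableOn).congr (.of_forall fun x => ?_)
  have hx : ‖(x : E)‖ ≠ 0 := norm_ne_zero_iff.2 x.2
  simp [smul_smul, hx]

lemma integrable_sphere {f : sphere (0 : E) 1 → F} (hf : Continuous f) :
    Integrable f μ.toSphere :=
  hf.integrable_of_hasCompactSupport (.of_compactSpace _)

variable [NormedSpace ℝ F]

lemma integrableOn_pow_smul_integral_sphere {g : E → F} (hg : Integrable g μ) :
    IntegrableOn (fun r : ℝ => r ^ (Module.finrank ℝ E - 1) •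
      ∫ ω : sphere (0 : E) 1, g (r • (ω : E)) ∂μ.toSphere) (Set.Ioi 0) := by
  have h := (integrable_comp_smul_sphere_prod hg).integral_prod_right
  simp only [Measure.volumeIoiPow, ENNReal.ofReal] at h
  rw [integrable_withDensity_iff_integrable_smul
    (measurable_subtype_coe.pow_const _).real_toNNReal] at h
  rw [integrableOn_iff_comap_subtypeVal measurableSet_Ioi]
  refine h.congr (.of_forall fun r => ?_)
  simp [NNReal.smul_def, pow_nonneg r.2.out.le]

lemma integral_eq_integral_pow_smul_integral_sphere [Nontrivial E] {g : E → F}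
    (hg : Integrable g μ) :
    ∫ x, g x ∂μ = ∫ r in Set.Ioi (0 : ℝ), r ^ (Module.finrank ℝ E - 1) •
      ∫ ω : sphere (0 : E) 1, g (r • (ω : E)) ∂μ.toSphere := by
  calc ∫ x, g x ∂μ
      = ∫ x : ({0}ᶜ : Set E), g x ∂(μ.comap (↑)) := by
        rw [integral_subtype_comap (measurableSet_singleton _).compl g, restrict_compl_singleton]
    _ = ∫ p : sphere (0 : E) 1 × Set.Ioi (0 : ℝ), g ((p.2 : ℝ) • (p.1 : E))
          ∂(μ.toSphere.prod (.volumeIoiPow (Module.finrank ℝ E - 1))) := by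
        rw [← μ.measurePreserving_homeomorphUnitSphereProd.integral_comp
          (homeomorphUnitSphereProd E).measurableEmbedding]
        refine integral_congr_ae (.of_forall fun x => ?_)
        have hx : ‖(x : E)‖ ≠ 0 := norm_ne_zero_iff.2 x.2
        simp [smul_smul, hx]
    _ = ∫ r : Set.Ioi (0 : ℝ), ∫ ω : sphere (0 : E) 1, g ((r : ℝ) • (ω : E)) ∂μ.toSphere
          ∂(.volumeIoiPow (Module.finrank ℝ E - 1)) :=
        integral_prod_symm _ (integrable_comp_smul_sphere_prod hg)
    _ = _ := by
        simp only [Measure.volumeIoiPow, ENNReal.ofReal]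
        rw [integral_withDensity_eq_integral_smul
            (measurable_subtype_coe.pow_const _).real_toNNReal,
          integral_subtype_comap measurableSet_Ioi fun r : ℝ =>
            Real.toNNReal (r ^ (Module.finrank ℝ E - 1)) •
              ∫ ω : sphere (0 : E) 1, g (r • (ω : E)) ∂μ.toSphere]
        refine setIntegral_congr_fun measurableSet_Ioi fun r hr => ?_
        simp [NNReal.smul_def, pow_nonneg hr.out.le]

lemma integrable_norm_inv_pow_mul {Ψ : E → E → ℝ} {j : ℕ} (hj : j < Module.finrank ℝ E)
    (hΨ : Continuous (Function.uncurry Ψ)) {K : Set E} (hK : IsCompact K)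
    (hΨK : ∀ x ∉ K, ∀ y, Ψ x y = 0) :
    Integrable (fun x => ‖x‖⁻¹ ^ j * Ψ x (‖x‖⁻¹ • x)) μ := by
  obtain ⟨C, hC⟩ := (hK.prod (isCompact_closedBall (0 : E) 1)).exists_bound_of_continuousOn
    hΨ.continuousOn
  have hbound : ∀ x, ‖‖x‖⁻¹ ^ j * Ψ x (‖x‖⁻¹ • x)‖ ≤ |C| * ‖x‖ ^ (-j : ℝ) := by
    intro x
    rw [norm_mul, norm_pow, norm_inv, norm_norm, rpow_neg (norm_nonneg x), rpow_natCast, inv_pow,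
      mul_comm]
    gcongr
    by_cases hx : x ∈ K
    · refine (hC (x, ‖x‖⁻¹ • x) ⟨hx, ?_⟩).trans (le_abs_self C)
      simpa [norm_smul] using inv_mul_le_one
    · simp [hΨK x hx]
  have hmeas : Measurable fun x => ‖x‖⁻¹ ^ j * Ψ x (‖x‖⁻¹ • x) :=
    (measurable_norm.inv.pow_const j).mul (hΨ.measurable.comp (g := Function.uncurry Ψ)
      (f := fun x => (x, ‖x‖⁻¹ • x)) (by fun_prop))
  refine (integrableOn_iff_integrable_of_support_subset fun x hx => ?_).1
    ((locallyIntegrable_of_norm_le_rpow (by lia) (by exact_mod_cast hj) (.of_forall hbound)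
      hmeas.aestronglyMeasurable).integrableOn_isCompact hK)
  by_contra hxK
  exact hx (by simp [hΨK x hxK])

lemma continuous_integral_sphere {X : Type*} [TopologicalSpace X]
    [FirstCountableTopology X] [LocallyCompactSpace X] {f : X → E → F}
    (hf : Continuous (Function.uncurry f)) :
    Continuous fun p => ∫ ω : sphere (0 : E) 1, f p ω ∂μ.toSphere := by
  have h : Continuous (Function.uncurry fun p (ω : sphere (0 : E) 1) => f p ω) :=
    hf.comp (continuous_id.prodMap continuous_subtype_val)
  simpa using continuous_parametric_integral_of_continuous (μ := μ.toSphere) h isCompact_univ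

end PolarCoordinates

/-! ### Second moments of the surface measure -/

section SphereMoments

variable {E : Type*} [NormedAddCommGroup E] [InnerProductSpace ℝ E]

lemma mapsTo_unitSphere (e : E ≃ₗᵢ[ℝ] E) :
    Set.MapsTo e (sphere (0 : E) 1) (sphere (0 : E) 1) := fun x hx => by
  simpa using hx

variable [FiniteDimensional ℝ E] [MeasurableSpace E] [BorelSpace E]

open scoped Pointwise in
lemma measurePreserving_restrict_unitSphere (e : E ≃ₗᵢ[ℝ] E) :
    MeasurePreserving (mapsTo_unitSphere e).restrict
      (volume : Measure E).toSphere (volume : Measure E).toSphere := by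
  have hmeas : Measurable (mapsTo_unitSphere e).restrict :=
    (e.continuous.restrict (mapsTo_unitSphere e)).measurable
  refine ⟨hmeas, Measure.ext fun s hs => ?_⟩
  rw [Measure.map_apply hmeas hs, Measure.toSphere_apply' _ (hmeas hs),
    Measure.toSphere_apply' _ hs]
  have hcone : Set.Ioo (0 : ℝ) 1 • ((↑) '' ((mapsTo_unitSphere e).restrict ⁻¹' s) : Set E) =
      e ⁻¹' (Set.Ioo (0 : ℝ) 1 • ((↑) '' s : Set E)) := by
    ext x
    simp only [Set.mem_smul, Set.mem_preimage, Set.mem_image]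
    constructor
    · rintro ⟨r, hr, _, ⟨ω, hω, rfl⟩, rfl⟩
      exact ⟨r, hr, _, ⟨_, hω, rfl⟩, (map_smul e r _).symm⟩
    · rintro ⟨r, hr, _, ⟨ω, hω, rfl⟩, hx⟩
      refine ⟨r, hr, e.symm ω, ⟨⟨e.symm ω, by simp⟩, ?_, rfl⟩, ?_⟩
      · convert hω
        ext
        simp
      · rw [← map_smul, hx, e.symm_apply_apply]
  rw [hcone, e.measurePreserving.measure_preimage_emb e.toHomeomorph.measurableEmbedding]

lemma integral_sphere_comp_isometry (e : E ≃ₗᵢ[ℝ] E) {f : E → ℝ} (hf : Continuous f) :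
    ∫ ω : sphere (0 : E) 1, f (e ω) ∂(volume : Measure E).toSphere =
      ∫ ω : sphere (0 : E) 1, f ω ∂(volume : Measure E).toSphere := by
  conv_rhs => rw [← (measurePreserving_restrict_unitSphere e).map_eq]
  exact (integral_map (measurePreserving_restrict_unitSphere e).measurable.aemeasurable
    (hf.comp continuous_subtype_val).aestronglyMeasurable).symm

lemma integral_sphere_inner_sq_of_norm_eq {a b : E} (h : ‖a‖ = ‖b‖) :
    ∫ ω : sphere (0 : E) 1, inner ℝ a (ω : E) ^ 2 ∂(volume : Measure E).toSphere =
      ∫ ω : sphere (0 : E) 1, inner ℝ b (ω : E) ^ 2 ∂(volume : Measure E).toSphere := by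
  let e := (Submodule.span ℝ {a - b})ᗮ.reflection
  have he : e a = b := Submodule.reflection_sub h
  rw [← integral_sphere_comp_isometry e (f := fun x => inner ℝ b x ^ 2) (by fun_prop)]
  simp only [← he, e.inner_map_map]

-- All unit vectors have the same second moment, and over an orthonormal basis these add up to
-- the total mass.
lemma finrank_mul_integral_sphere_inner_sq (a : E) :
    Module.finrank ℝ E *
        ∫ ω : sphere (0 : E) 1, inner ℝ a (ω : E) ^ 2 ∂(volume : Measure E).toSphere =
      (volume : Measure E).toSphere.real Set.univ * ‖a‖ ^ 2 := by
  let b := stdOrthonormalBasis ℝ E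
  calc Module.finrank ℝ E *
        ∫ ω : sphere (0 : E) 1, inner ℝ a (ω : E) ^ 2 ∂(volume : Measure E).toSphere
      = ∑ i, ∫ ω : sphere (0 : E) 1, inner ℝ (‖a‖ • b i) (ω : E) ^ 2
          ∂(volume : Measure E).toSphere := by
        rw [Finset.sum_congr rfl fun i _ => integral_sphere_inner_sq_of_norm_eq
          (a := ‖a‖ • b i) (b := a) (by simp [norm_smul])]
        simp
    _ = ∫ ω : sphere (0 : E) 1, ∑ i, inner ℝ (‖a‖ • b i) (ω : E) ^ 2
          ∂(volume : Measure E).toSphere :=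
        (integral_finsetSum _ fun i _ => integrable_sphere (by fun_prop)).symm
    _ = ∫ _ : sphere (0 : E) 1, ‖a‖ ^ 2 ∂(volume : Measure E).toSphere := by
        refine integral_congr_ae (.of_forall fun ω => ?_)
        simp [inner_smul_left, mul_pow, ← Finset.mul_sum, b.sum_sq_inner_right]
    _ = _ := by simp

end SphereMoments

instance : IsFiniteMeasure sphMeas := inferInstanceAs (IsFiniteMeasure (volume.toSphere))

lemma sphMeas_real_univ : sphMeas.real Set.univ = 4 * π := by
  rw [sphMeas, Measure.toSphere_real_apply_univ, measureReal_def,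
    EuclideanSpace.volume_ball_fin_three]
  simp only [finrank_euclideanSpace_fin, Nat.cast_ofNat, ENNReal.ofReal_one, one_pow, one_mul,
    ENNReal.toReal_ofReal (by positivity : (0 : ℝ) ≤ π * 4 / 3)]
  ring

lemma integral_sphMeas_dotProduct_sq (a : Fin 3 → ℝ) :
    ∫ ω : sphere (0 : E3) 1, (a ⬝ᵥ (ω : E3).ofLp) ^ 2 ∂sphMeas = 4 * π / 3 * (a ⬝ᵥ a) := by
  have h := finrank_mul_integral_sphere_inner_sq (WithLp.toLp 2 a : E3)
  rw [← sphMeas, sphMeas_real_univ, EuclideanSpace.real_norm_sq_eq] at h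
  simp only [EuclideanSpace.inner_eq_star_dotProduct, finrank_euclideanSpace_fin, Nat.cast_ofNat,
    star_trivial, dotProduct_comm _ a] at h
  simp only [dotProduct, ← sq] at h ⊢
  linarith

/-! ### Divergence theorem with a point singularity -/

section IntegrationByParts

lemma integrable_mul_of_continuousAt_tsupport {X : Type*} [TopologicalSpace X] [MeasurableSpace X]
    [OpensMeasurableSpace X] {μ : Measure X} [IsFiniteMeasureOnCompacts μ] {f g : X → ℝ}
    (hf : Continuous f) (hg : ∀ x ∈ tsupport f, ContinuousAt g x) (hgs : HasCompactSupport g) :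
    Integrable (fun x => f x * g x) μ :=
  (continuous_of_tsupport fun x hx =>
    hf.continuousAt.mul (hg x (tsupport_mul_subset_left hx))).integrable_of_hasCompactSupport
    hgs.mul_left

variable {E : Type*} [NormedAddCommGroup E] [NormedSpace ℝ E] [FiniteDimensional ℝ E]
  [MeasurableSpace E] [BorelSpace E] {μ : Measure E} [μ.IsAddHaarMeasure]

lemma integral_mul_fderiv_eq_neg_of_contDiffAt_tsupport {f g : E → ℝ} (hf : ContDiff ℝ 1 f)
    (hg : ∀ x ∈ tsupport f, ContDiffAt ℝ 1 g x) (hgs : HasCompactSupport g) (v : E) :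
    ∫ x, f x * fderiv ℝ g x v ∂μ = -∫ x, fderiv ℝ f x v * g x ∂μ := by
  refine integral_mul_fderiv_eq_neg_fderiv_mul_of_integrable ?_ ?_ ?_
    (fun x _ => hf.differentiable one_ne_zero x)
    fun x hx => (hg x hx).differentiableAt one_ne_zero
  · exact integrable_mul_of_continuousAt_tsupport
      ((hf.continuous_fderiv one_ne_zero).clm_apply continuous_const)
      (fun x hx => (hg x (tsupport_fderiv_apply_subset ℝ v hx)).continuousAt) hgs
  · exact integrable_mul_of_continuousAt_tsupport hf.continuous
      (fun x hx => ((hg x hx).continuousAt_fderiv one_ne_zero).clm_apply continuousAt_const)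
      (hgs.fderiv_apply ℝ v)
  · exact integrable_mul_of_continuousAt_tsupport hf.continuous
      (fun x hx => (hg x hx).continuousAt) hgs

end IntegrationByParts

/-- A smooth cutoff rising from `0` on `r ≤ t` to `1` on `r ≥ 2 * t`; composed with the norm it
removes a neighbourhood of the origin. -/
def radialCutoff (t r : ℝ) : ℝ := smoothTransition (t⁻¹ * r - 1)

section RadialCutoff

variable {t r : ℝ}

lemma radialCutoff_of_le (ht : 0 < t) (h : r ≤ t) : radialCutoff t r = 0 :=
  smoothTransition.zero_of_nonpos <| by
    rw [sub_nonpos, inv_mul_le_iff₀ ht, mul_one]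
    exact h

lemma radialCutoff_of_two_mul_le (ht : 0 < t) (h : 2 * t ≤ r) : radialCutoff t r = 1 :=
  smoothTransition.one_of_one_le <| by
    rw [le_sub_iff_add_le, le_inv_mul_iff₀ ht]
    linarith

lemma contDiff_radialCutoff (t : ℝ) : ContDiff ℝ 1 (radialCutoff t) :=
  (smoothTransition.contDiff (n := 1)).comp (by fun_prop)

lemma continuous_deriv_radialCutoff (t : ℝ) : Continuous (deriv (radialCutoff t)) :=
  (contDiff_radialCutoff t).continuous_deriv le_rfl

lemma norm_radialCutoff_le_one (t r : ℝ) : ‖radialCutoff t r‖ ≤ 1 := by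
  rw [radialCutoff, norm_of_nonneg (smoothTransition.nonneg _)]
  exact smoothTransition.le_one _

lemma monotone_radialCutoff (ht : 0 < t) : Monotone (radialCutoff t) := fun a b hab =>
  smoothTransition.monotone (by gcongr)

lemma zero_notMem_tsupport_radialCutoff (ht : 0 < t) : 0 ∉ tsupport (radialCutoff t) := by
  rw [notMem_tsupport_iff_eventuallyEq]
  filter_upwards [Iio_mem_nhds ht] with r hr
  exact radialCutoff_of_le ht hr.le

lemma deriv_radialCutoff_of_two_mul_lt (ht : 0 < t) (h : 2 * t < r) :
    deriv (radialCutoff t) r = 0 := by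
  have h1 : radialCutoff t =ᶠ[nhds r] fun _ => 1 := by
    filter_upwards [Ioi_mem_nhds h] with s hs
    exact radialCutoff_of_two_mul_le ht hs.le
  rw [h1.deriv_eq, deriv_const]

lemma integral_deriv_radialCutoff (ht : 0 < t) (h : 2 * t ≤ 1) :
    ∫ r in Set.Ioc 0 1, deriv (radialCutoff t) r = 1 := by
  rw [← intervalIntegral.integral_of_le zero_le_one, intervalIntegral.integral_deriv_eq_sub
    (fun r _ => (contDiff_radialCutoff t).differentiable one_ne_zero r)
    ((continuous_deriv_radialCutoff t).intervalIntegrable _ _),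
    radialCutoff_of_two_mul_le ht h, radialCutoff_of_le ht ht.le, sub_zero]

lemma eventually_two_mul_lt_nhdsGT_zero {δ : ℝ} (hδ : 0 < δ) :
    ∀ᶠ t in nhdsWithin (0 : ℝ) (Set.Ioi 0), 0 < t ∧ 2 * t < δ := by
  filter_upwards [Ioo_mem_nhdsGT (half_pos hδ)] with t ht
  exact ⟨ht.1, by linarith [ht.2]⟩

lemma tendsto_integral_deriv_radialCutoff_mul {g : ℝ → ℝ} {c : ℝ}
    (hg : IntegrableOn g (Set.Ioi 0)) (hc : Tendsto g (nhdsWithin 0 (Set.Ioi 0)) (nhds c)) :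
    Tendsto (fun t => ∫ r in Set.Ioi 0, deriv (radialCutoff t) r * g r)
      (nhdsWithin 0 (Set.Ioi 0)) (nhds c) := by
  refine tendsto_setIntegral_peak_smul_of_integrableOn_of_tendsto measurableSet_Ioi
    measurableSet_Ioc Set.Ioc_subset_Ioi_self (Ioc_mem_nhdsGT one_pos) measure_Ioc_lt_top.ne
    ?_ ?_ ?_ (.of_forall fun t => (continuous_deriv_radialCutoff t).aestronglyMeasurable) hg hc
  · filter_upwards [self_mem_nhdsWithin] with t ht r _
    exact (monotone_radialCutoff ht).deriv_nonneg
  · intro U hU h0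
    obtain ⟨δ, hδ, hball⟩ := isOpen_iff.1 hU 0 h0
    rw [tendstoUniformlyOn_iff]
    intro ε hε
    filter_upwards [eventually_two_mul_lt_nhdsGT_zero hδ] with t ht r hr
    have hrδ : δ ≤ r := by
      by_contra! h
      exact hr.2 (hball (by rwa [mem_ball_zero_iff, norm_of_nonneg hr.1.out.le]))
    simpa [deriv_radialCutoff_of_two_mul_lt ht.1 (ht.2.trans_le hrδ)] using hε
  · refine tendsto_const_nhds.congr' ?_
    filter_upwards [eventually_two_mul_lt_nhdsGT_zero one_pos] with t ht
    exact (integral_deriv_radialCutoff ht.1 ht.2.le).symm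

lemma tendsto_integral_radialCutoff_norm_mul {E : Type*} [NormedAddCommGroup E]
    [MeasurableSpace E] [OpensMeasurableSpace E] {μ : Measure E} [NullSingletonClass μ] {f : E → ℝ}
    (hf : Integrable f μ) :
    Tendsto (fun t => ∫ x, radialCutoff t ‖x‖ * f x ∂μ)
      (nhdsWithin 0 (Set.Ioi 0)) (nhds (∫ x, f x ∂μ)) := by
  refine tendsto_integral_filter_of_dominated_convergence (fun x => ‖f x‖)
    (.of_forall fun t => ?_) (.of_forall fun t => .of_forall fun x => ?_) hf.norm ?_
  · exact ((contDiff_radialCutoff t).continuous.measurable.comp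
      measurable_norm).aestronglyMeasurable.mul hf.aestronglyMeasurable
  · rw [norm_mul]
    exact mul_le_of_le_one_left (norm_nonneg _) (norm_radialCutoff_le_one t _)
  · filter_upwards [compl_mem_ae_iff.2 (measure_singleton (0 : E))] with x hx
    refine tendsto_const_nhds.congr' ?_
    filter_upwards [eventually_two_mul_lt_nhdsGT_zero (norm_pos_iff.2 hx)] with t ht
    rw [radialCutoff_of_two_mul_le ht.1 ht.2.le, one_mul]

end RadialCutoff

section PointSingularity

section Norm

variable {E : Type*} [NormedAddCommGroup E]

lemma zero_notMem_tsupport_comp_norm {φ : ℝ → ℝ} (hφ : 0 ∉ tsupport φ) :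
    (0 : E) ∉ tsupport fun x => φ ‖x‖ := fun h => hφ <| by
  simpa using tsupport_comp_subset_preimage φ continuous_norm h

variable [InnerProductSpace ℝ E]

lemma fderiv_norm_apply {x : E} (hx : x ≠ 0) (v : E) :
    fderiv ℝ (fun y => ‖y‖) x v = ‖x‖⁻¹ * inner ℝ x v := by
  have h := (hasStrictFDerivAt_norm_sq x).hasFDerivAt.sqrt (by simpa using hx)
  simp only [sqrt_sq (norm_nonneg _)] at h
  rw [h.fderiv]
  simp only [one_div, mul_inv_rev, smul_apply, coe_innerSL_apply, nsmul_eq_mul, Nat.cast_ofNat,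
    smul_eq_mul]
  ring

lemma fderiv_comp_norm_apply {φ : ℝ → ℝ} {x : E} (hφ : DifferentiableAt ℝ φ ‖x‖) (hx : x ≠ 0)
    (v : E) : fderiv ℝ (fun y => φ ‖y‖) x v = deriv φ ‖x‖ * (‖x‖⁻¹ * inner ℝ x v) := by
  have h := (hφ.hasDerivAt.comp_hasFDerivAt x
    ((contDiffAt_norm ℝ hx (n := 1)).differentiableAt one_ne_zero).hasFDerivAt).fderiv
  simp only [Function.comp_def] at h
  simp [h, fderiv_norm_apply hx]

lemma contDiff_comp_norm {n : WithTop ℕ∞} {φ : ℝ → ℝ} (hφ : ContDiff ℝ n φ)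
    (hφ0 : 0 ∉ tsupport φ) : ContDiff ℝ n fun x : E => φ ‖x‖ :=
  contDiff_iff_contDiffAt.2 fun x => by
    by_cases hx : x = 0
    · subst hx
      exact contDiffAt_const.congr_of_eventuallyEq
        (notMem_tsupport_iff_eventuallyEq.1 (zero_notMem_tsupport_comp_norm hφ0))
    · exact hφ.contDiffAt.comp x (contDiffAt_norm ℝ hx)

end Norm

variable {ι : Type*} [Fintype ι]

/-- The flux `r ^ (n - 1) * ∫ ω·F(rω) dσ(ω)` of the field `F` through the sphere of radius `r`
in dimension `n`. -/
def outwardFlux (F : ι → EuclideanSpace ℝ ι → ℝ) (r : ℝ) : ℝ :=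
  r ^ (Fintype.card ι - 1) * ∫ ω : sphere (0 : EuclideanSpace ℝ ι) 1,
    ∑ k, (ω : EuclideanSpace ℝ ι) k * F k (r • (ω : EuclideanSpace ℝ ι))
      ∂(volume : Measure (EuclideanSpace ℝ ι)).toSphere

variable {F : ι → EuclideanSpace ℝ ι → ℝ}

lemma outwardFlux_of_pos {r : ℝ} (hr : 0 < r) :
    outwardFlux F r = r ^ (Module.finrank ℝ (EuclideanSpace ℝ ι) - 1) •
      ∫ ω : sphere (0 : EuclideanSpace ℝ ι) 1, (fun x => ‖x‖⁻¹ * ∑ k, x k * F k x)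
        (r • (ω : EuclideanSpace ℝ ι)) ∂(volume : Measure (EuclideanSpace ℝ ι)).toSphere := by
  simp [outwardFlux, norm_smul, abs_of_pos hr, Finset.mul_sum, mul_assoc, hr.ne']

lemma integrableOn_outwardFlux (hF : ∀ k, Integrable (F k)) :
    IntegrableOn (outwardFlux F) (Set.Ioi 0) := by
  have hint : Integrable fun x => ‖x‖⁻¹ * ∑ k, x k * F k x := by
    simp only [Finset.mul_sum, ← mul_assoc]
    refine integrable_finsetSum _ fun k _ => (hF k).bdd_mul (c := 1) (by fun_prop)
      (.of_forall fun x => ?_)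
    rw [norm_mul, norm_inv, norm_norm]
    exact (mul_le_mul_of_nonneg_left (PiLp.norm_apply_le x k) (by positivity)).trans
      inv_mul_le_one
  exact (integrableOn_pow_smul_integral_sphere hint).congr_fun
    (fun r hr => (outwardFlux_of_pos hr).symm) measurableSet_Ioi

variable [Nonempty ι] [DecidableEq ι]

lemma integral_radial_mul_divergence {φ : ℝ → ℝ} (hφ : ContDiff ℝ 1 φ) (hφ0 : 0 ∉ tsupport φ)
    (hF : ∀ k x, x ≠ 0 → ContDiffAt ℝ 1 (F k) x) (hFs : ∀ k, HasCompactSupport (F k)) :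
    ∫ x, φ ‖x‖ * ∑ k, fderiv ℝ (F k) x (EuclideanSpace.single k 1) =
      -∫ r in Set.Ioi 0, deriv φ r * outwardFlux F r := by
  set η : EuclideanSpace ℝ ι → ℝ := fun x => φ ‖x‖
  have hη : ContDiff ℝ 1 η := contDiff_comp_norm hφ hφ0
  have hFη : ∀ k, ∀ x ∈ tsupport η, ContDiffAt ℝ 1 (F k) x := fun k x hx =>
    hF k x (ne_of_mem_of_not_mem hx (zero_notMem_tsupport_comp_norm hφ0))
  have hgrad : ∀ x ≠ 0, ∑ k, fderiv ℝ η x (EuclideanSpace.single k 1) * F k x =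
      deriv φ ‖x‖ * (‖x‖⁻¹ * ∑ k, x k * F k x) := fun x hx => by
    simp [η, fderiv_comp_norm_apply (hφ.differentiable one_ne_zero _) hx,
      EuclideanSpace.inner_single_right, Finset.mul_sum, mul_assoc]
  have hint : ∀ k, Integrable fun x => fderiv ℝ η x (EuclideanSpace.single k 1) * F k x :=
    fun k => integrable_mul_of_continuousAt_tsupport
      ((hη.continuous_fderiv one_ne_zero).clm_apply continuous_const)
      (fun x hx => (hFη k x (tsupport_fderiv_apply_subset ℝ _ hx)).continuousAt) (hFs k)
  calc ∫ x, η x * ∑ k, fderiv ℝ (F k) x (EuclideanSpace.single k 1)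
      = -∫ x, ∑ k, fderiv ℝ η x (EuclideanSpace.single k 1) * F k x := by
        simp only [Finset.mul_sum]
        rw [integral_finsetSum _ fun k _ => integrable_mul_of_continuousAt_tsupport hη.continuous
            (fun x hx => ((hFη k x hx).continuousAt_fderiv one_ne_zero).clm_apply
              continuousAt_const) ((hFs k).fderiv_apply ℝ _),
          integral_finsetSum _ fun k _ => hint k, ← Finset.sum_neg_distrib]
        exact Finset.sum_congr rfl fun k _ =>
          integral_mul_fderiv_eq_neg_of_contDiffAt_tsupport hη (hFη k) (hFs k) _
    _ = -∫ r in Set.Ioi 0, deriv φ r * outwardFlux F r := by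
        rw [integral_eq_integral_pow_smul_integral_sphere
          (integrable_finsetSum _ fun k _ => hint k)]
        refine congrArg _ (setIntegral_congr_fun measurableSet_Ioi fun r hr => ?_)
        rw [outwardFlux_of_pos hr, smul_eq_mul, smul_eq_mul, mul_left_comm,
          ← integral_const_mul (deriv φ r)]
        refine congrArg _ (integral_congr_ae (.of_forall fun ω => ?_))
        have hne : r • (ω : EuclideanSpace ℝ ι) ≠ 0 :=
          smul_ne_zero hr.out.ne' (ne_zero_of_mem_unit_sphere ω)
        dsimp only
        rw [hgrad _ hne, norm_smul, norm_of_nonneg hr.out.le, norm_eq_of_mem_sphere, mul_one]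

-- Cut off near the origin: as the cutoff radius shrinks, its derivative acts as a Dirac mass at `0`
-- on the flux.
lemma integral_divergence_eq_neg_of_tendsto_outwardFlux {c : ℝ}
    (hF : ∀ k x, x ≠ 0 → ContDiffAt ℝ 1 (F k) x) (hFs : ∀ k, HasCompactSupport (F k))
    (hFi : ∀ k, Integrable (F k))
    (hdiv : Integrable fun x => ∑ k, fderiv ℝ (F k) x (EuclideanSpace.single k 1))
    (hflux : Tendsto (outwardFlux F) (nhdsWithin 0 (Set.Ioi 0)) (nhds c)) :
    ∫ x, ∑ k, fderiv ℝ (F k) x (EuclideanSpace.single k 1) = -c := by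
  refine tendsto_nhds_unique (tendsto_integral_radialCutoff_norm_mul hdiv) ?_
  refine (tendsto_integral_deriv_radialCutoff_mul (integrableOn_outwardFlux hFi)
    hflux).neg.congr' ?_
  filter_upwards [self_mem_nhdsWithin] with t ht
  exact (integral_radial_mul_divergence (contDiff_radialCutoff t)
    (zero_notMem_tsupport_radialCutoff ht) hF hFs).symm

end PointSingularity

/-! ### Vector calculus in coordinates -/

section PartialDerivatives

variable {f g : E3 → ℝ} {u V W : E3 → Fin 3 → ℝ} {x : E3}

/-- The gradient of a function on `ℝ³`, as a coordinate vector. -/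
def grad (f : E3 → ℝ) (x : E3) : Fin 3 → ℝ := fun k => pd k f x

/-- The Jacobian matrix `(∂ₖ uᵢ)ᵢₖ` of a vector field on `ℝ³`. -/
def jac (u : E3 → Fin 3 → ℝ) (x : E3) : Matrix (Fin 3) (Fin 3) ℝ :=
  Matrix.of fun i k => pd k (fun y => u y i) x

/-- The componentwise Laplacian of a vector field on `ℝ³`. -/
def vecLap (u : E3 → Fin 3 → ℝ) (x : E3) : Fin 3 → ℝ := fun i => lap (fun y => u y i) x

lemma pd_add (k : Fin 3) (hf : DifferentiableAt ℝ f x) (hg : DifferentiableAt ℝ g x) :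
    pd k (fun y => f y + g y) x = pd k f x + pd k g x := by
  simp [pd, fderiv_fun_add hf hg]

lemma pd_sub (k : Fin 3) (hf : DifferentiableAt ℝ f x) (hg : DifferentiableAt ℝ g x) :
    pd k (fun y => f y - g y) x = pd k f x - pd k g x := by
  simp [pd, fderiv_fun_sub hf hg]

lemma pd_mul (k : Fin 3) (hf : DifferentiableAt ℝ f x) (hg : DifferentiableAt ℝ g x) :
    pd k (fun y => f y * g y) x = pd k f x * g x + f x * pd k g x := by
  simp only [pd, fderiv_fun_mul hf hg, add_apply, smul_apply, smul_eq_mul]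
  ring

lemma pd_sum (k : Fin 3) {h : Fin 3 → E3 → ℝ} (hh : ∀ i, DifferentiableAt ℝ (h i) x) :
    pd k (fun y => ∑ i, h i y) x = ∑ i, pd k (h i) x := by
  simp [pd, fderiv_fun_sum fun i _ => hh i]

lemma pd_coord (k i : Fin 3) : pd k (fun y : E3 => y i) x = if i = k then 1 else 0 := by
  have h : HasFDerivAt (fun y : E3 => y i) (EuclideanSpace.proj i : E3 →L[ℝ] ℝ) x :=
    (EuclideanSpace.proj i : E3 →L[ℝ] ℝ).hasFDerivAt
  simp [pd, h.fderiv]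

lemma contDiff_pd {n : WithTop ℕ∞} (hf : ContDiff ℝ (n + 1) f) (k : Fin 3) :
    ContDiff ℝ n (pd k f) :=
  (hf.fderiv_right le_rfl).clm_apply contDiff_const

lemma pd_comm (hf : ContDiff ℝ 2 f) (k l : Fin 3) (x : E3) : pd l (pd k f) x = pd k (pd l f) x := by
  have hd : DifferentiableAt ℝ (fderiv ℝ f) x :=
    (hf.fderiv_right (m := 1) (by norm_num)).differentiable one_ne_zero x
  have hpd : ∀ a b, pd a (pd b f) x =
      fderiv ℝ (fderiv ℝ f) x (EuclideanSpace.single a 1) (EuclideanSpace.single b 1) :=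
    fun a b => by
      unfold pd
      simp [fderiv_clm_apply hd (differentiableAt_const _)]
  rw [hpd, hpd]
  exact hf.contDiffAt.isSymmSndFDerivAt (by simp) _ _

lemma grad_norm_inv_pow (m : ℕ) (hx : x ≠ 0) :
    grad (fun y => ‖y‖⁻¹ ^ m) x = -(m * ‖x‖⁻¹ ^ (m + 2)) • x.ofLp := by
  have hn : ‖x‖ ≠ 0 := norm_ne_zero_iff.2 hx
  have hinv := (hasDerivAt_inv hn).pow m
  ext k
  refine (fderiv_comp_norm_apply hinv.differentiableAt hx _).trans ?_
  rw [hinv.deriv]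
  rcases m with _ | m
  · simp
  · simp only [EuclideanSpace.inner_single_right, Pi.smul_apply, smul_eq_mul, conj_trivial,
      Nat.add_one_sub_one, inv_pow]
    field

lemma grad_dotProduct (hV : DifferentiableAt ℝ V x) (hW : DifferentiableAt ℝ W x) :
    grad (fun y => V y ⬝ᵥ W y) x = V x ᵥ* jac W x + W x ᵥ* jac V x := by
  rw [differentiableAt_pi] at hV hW
  ext k
  simp only [grad, dotProduct, Pi.add_apply, Matrix.vecMul, jac, Matrix.of_apply]
  rw [pd_sum k fun i => (hV i).fun_mul (hW i), ← Finset.sum_add_distrib]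
  refine Finset.sum_congr rfl fun i _ => ?_
  rw [pd_mul k (hV i) (hW i)]
  ring

lemma jac_ofLp : jac (fun y => y.ofLp) x = 1 := by
  ext i k
  simp [jac, pd_coord, Matrix.one_apply]

lemma divg_ofLp : divg (fun y => y.ofLp) x = 3 := by
  simp [divg, pd_coord]

lemma divg_add (hV : DifferentiableAt ℝ V x) (hW : DifferentiableAt ℝ W x) :
    divg (fun y => V y + W y) x = divg V x + divg W x := by
  rw [differentiableAt_pi] at hV hW
  simp only [divg, Pi.add_apply, pd_add _ (hV _) (hW _), Finset.sum_add_distrib]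

lemma divg_smul (hf : DifferentiableAt ℝ f x) (hV : DifferentiableAt ℝ V x) :
    divg (fun y => f y • V y) x = f x * divg V x + grad f x ⬝ᵥ V x := by
  rw [differentiableAt_pi] at hV
  simp only [divg, Pi.smul_apply, smul_eq_mul, pd_mul _ hf (hV _), Finset.sum_add_distrib,
    Finset.mul_sum, dotProduct, grad]
  ring

lemma divg_const_smul (c : ℝ) (hV : DifferentiableAt ℝ V x) :
    divg (fun y => c • V y) x = c * divg V x := by
  rw [divg_smul (differentiableAt_const c) hV]
  simp [grad, pd, dotProduct]

lemma contDiffAt_norm_inv_pow {n : WithTop ℕ∞} (m : ℕ) (hx : x ≠ 0) :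
    ContDiffAt ℝ n (fun y : E3 => ‖y‖⁻¹ ^ m) x :=
  ((contDiffAt_norm ℝ hx).inv (norm_ne_zero_iff.2 hx)).pow m

lemma divg_norm_inv_pow_smul (m : ℕ) (hx : x ≠ 0) (hV : DifferentiableAt ℝ V x) :
    divg (fun y => ‖y‖⁻¹ ^ m • V y) x =
      ‖x‖⁻¹ ^ m * divg V x - m * ‖x‖⁻¹ ^ (m + 2) * (x.ofLp ⬝ᵥ V x) := by
  have hm := (contDiffAt_norm_inv_pow (n := 1) m hx).differentiableAt one_ne_zero
  rw [divg_smul hm hV, grad_norm_inv_pow m hx, smul_dotProduct, smul_eq_mul]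
  ring

lemma contDiff_jac_apply {n : WithTop ℕ∞} (hu : ContDiff ℝ (n + 1) u) (i k : Fin 3) :
    ContDiff ℝ n fun y => jac u y i k :=
  contDiff_pd (contDiff_pi.1 hu i) k

lemma contDiff_divg {n : WithTop ℕ∞} (hu : ContDiff ℝ (n + 1) u) : ContDiff ℝ n (divg u) :=
  ContDiff.sum fun k _ => contDiff_jac_apply hu k k

lemma divg_vecMul_jac (hV : DifferentiableAt ℝ V x) (hu : ContDiff ℝ 2 u) :
    divg (fun y => V y ᵥ* jac u y) x =
      V x ⬝ᵥ vecLap u x + ∑ i, ∑ k, jac V x i k * jac u x i k := by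
  rw [differentiableAt_pi] at hV
  have hG : ∀ i k, DifferentiableAt ℝ (fun y => jac u y i k) x := fun i k =>
    (contDiff_jac_apply (n := 1) hu i k).differentiable one_ne_zero x
  simp only [divg, Matrix.vecMul, dotProduct, vecLap, lap, Finset.mul_sum]
  simp only [pd_sum _ fun i => (hV i).fun_mul (hG i _), pd_mul _ (hV _) (hG _ _),
    Finset.sum_add_distrib]
  rw [add_comm, Finset.sum_comm, Finset.sum_comm (f := fun k i => pd k (fun y => V y i) x * _)]
  rfl

lemma lame_eq_vecLap_add_grad (α : ℝ) :
    lame α u x = -vecLap u x - α • grad (divg u) x := rfl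

end PartialDerivatives

/-! ### The energy identity -/

section EnergyFlux

variable {u : E3 → Fin 3 → ℝ} {x : E3}

/-- The field `y × f` with `f_l = y·(u × ∂_l u)`, where `a`, `G` stand for `u`, `Du`. It is
tangent to the spheres about the origin, and its divergence is a quadratic form in `Du` up to
first-order terms. -/
def twist (y a : Fin 3 → ℝ) (G : Matrix (Fin 3) (Fin 3) ℝ) : Fin 3 → ℝ :=
  y ⨯₃ ((y ⨯₃ a) ᵥ* G)

lemma divg_twist (hu : ContDiff ℝ 2 u) :
    divg (fun y => twist y.ofLp (u y) (jac u y)) x =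
      (x.ofLp ⬝ᵥ u x) * divg u x - x.ofLp ⬝ᵥ jac u x *ᵥ u x
        - 2 * (x.ofLp ⬝ᵥ (jac u x).adjugate *ᵥ x.ofLp) := by
  have hud : ∀ i, DifferentiableAt ℝ (fun y => u y i) x := fun i =>
    (contDiff_pi.1 hu i).differentiable two_ne_zero x
  have hGd : ∀ i k, DifferentiableAt ℝ (pd k fun y => u y i) x := fun i k =>
    (contDiff_jac_apply (n := 1) hu i k).differentiable one_ne_zero x
  have hcoord : ∀ i : Fin 3, DifferentiableAt ℝ (fun y : E3 => y i) x := fun i => by fun_prop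
  have hcomm : ∀ i k l, pd l (pd k fun y => u y i) x = pd k (pd l fun y => u y i) x :=
    fun i k l => pd_comm (contDiff_pi.1 hu i) k l x
  simp only [divg, twist, cross_apply, Matrix.vecMul, dotProduct, Matrix.mulVec, jac,
    Matrix.of_apply, Fin.sum_univ_three, Matrix.adjugate_fin_three, Matrix.cons_val]
  simp (disch := fun_prop) only [pd_add, pd_sub, pd_mul, pd_coord, Fin.reduceEq, if_true, if_false]
  simp only [hcomm _ 0 1, hcomm _ 0 2, hcomm _ 1 2]
  ring

/-- The coefficient `κ = α / (α + 2)` of the anisotropic part of the fundamental matrix. -/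
def anisotropy (α : ℝ) : ℝ := α / (α + 2)

/-- The quadratic form `W` for which `(Lu)·(Φu) / c_α` and `|x|⁻¹ W(Du, x/|x|)` differ by a
divergence. -/
def energyForm (α : ℝ) (G : Matrix (Fin 3) (Fin 3) ℝ) (y : Fin 3 → ℝ) : ℝ :=
  ∑ i, ∑ k, G i k ^ 2 + anisotropy α * (y ᵥ* G ⬝ᵥ y ᵥ* G) + α * G.trace ^ 2
    + α * anisotropy α * (G.trace * (y ⬝ᵥ G *ᵥ y)) - 2 * anisotropy α * (y ⬝ᵥ G.adjugate *ᵥ y)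

/-- The part of `energyFlux` with weight `|x|⁻¹`. -/
def energyFlux₁ (α : ℝ) (u : E3 → Fin 3 → ℝ) (x : E3) : Fin 3 → ℝ :=
  u x ᵥ* jac u x + α • (divg u x • u x)

/-- The part of `energyFlux` with weight `|x|⁻³`. -/
def energyFlux₃ (α : ℝ) (u : E3 → Fin 3 → ℝ) (x : E3) : Fin 3 → ℝ :=
  anisotropy α • (x.ofLp ⬝ᵥ u x) • x.ofLp ᵥ* jac u x
    + (α * anisotropy α) • ((x.ofLp ⬝ᵥ u x) * divg u x) • x.ofLp
    + (1 / 2 : ℝ) • (u x ⬝ᵥ u x) • x.ofLp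
    + anisotropy α • twist x.ofLp (u x) (jac u x)

/-- The part of `energyFlux` with weight `|x|⁻⁵`. -/
def energyFlux₅ (α : ℝ) (u : E3 → Fin 3 → ℝ) (x : E3) : Fin 3 → ℝ :=
  (3 / 2 * anisotropy α) • ((x.ofLp ⬝ᵥ u x) * (x.ofLp ⬝ᵥ u x)) • x.ofLp

/-- The vector field whose divergence is the difference between `|x|⁻¹ W(Du, x/|x|)` and
`(Lu)·(Φu) / c_α`. -/
def energyFlux (α : ℝ) (u : E3 → Fin 3 → ℝ) (x : E3) : Fin 3 → ℝ :=
  ‖x‖⁻¹ ^ 1 • energyFlux₁ α u x + ‖x‖⁻¹ ^ 3 • energyFlux₃ α u x + ‖x‖⁻¹ ^ 5 • energyFlux₅ α u x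

variable {f g : E3 → ℝ} {V W : E3 → Fin 3 → ℝ} {n : WithTop ℕ∞}

@[fun_prop]
lemma contDiff_dotProduct (hV : ContDiff ℝ n V) (hW : ContDiff ℝ n W) :
    ContDiff ℝ n fun y => V y ⬝ᵥ W y := by
  unfold dotProduct
  fun_prop

@[fun_prop]
lemma contDiff_vecMul_jac (hV : ContDiff ℝ n V) (hu : ContDiff ℝ (n + 1) u) :
    ContDiff ℝ n fun y => V y ᵥ* jac u y := by
  have hG : ∀ i k, ContDiff ℝ n fun y => jac u y i k := contDiff_jac_apply hu
  unfold Matrix.vecMul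
  fun_prop

@[fun_prop]
lemma contDiff_crossProduct {E : Type*} [NormedAddCommGroup E] [NormedSpace ℝ E]
    {v w : E → Fin 3 → ℝ} (hv : ContDiff ℝ n v) (hw : ContDiff ℝ n w) :
    ContDiff ℝ n fun y => v y ⨯₃ w y :=
  contDiff_pi.2 fun k => by
    fin_cases k <;> simp only [cross_apply, Fin.zero_eta, Fin.mk_one, Fin.reduceFinMk,
      Matrix.cons_val] <;> fun_prop

lemma grad_mul (hf : DifferentiableAt ℝ f x) (hg : DifferentiableAt ℝ g x) :
    grad (fun y => f y * g y) x = g x • grad f x + f x • grad g x := by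
  ext k
  simp only [grad, pd_mul k hf hg, Pi.add_apply, Pi.smul_apply, smul_eq_mul, mul_comm (g x)]

lemma grad_ofLp_dotProduct (hu : DifferentiableAt ℝ u x) :
    grad (fun y => y.ofLp ⬝ᵥ u y) x = x.ofLp ᵥ* jac u x + u x := by
  rw [grad_dotProduct (by fun_prop) hu, jac_ofLp, Matrix.vecMul_one]

lemma divg_smul_ofLp (hf : DifferentiableAt ℝ f x) :
    divg (fun y => f y • y.ofLp) x = 3 * f x + grad f x ⬝ᵥ x.ofLp := by
  rw [divg_smul hf (by fun_prop), divg_ofLp, mul_comm]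

lemma contDiff_energyFlux₁ (α : ℝ) (hu : ContDiff ℝ 2 u) : ContDiff ℝ 1 (energyFlux₁ α u) := by
  have hu₁ : ContDiff ℝ 1 u := hu.of_le one_le_two
  have hu₂ : ContDiff ℝ (1 + 1) u := hu
  have hd := contDiff_divg hu₂
  unfold energyFlux₁
  fun_prop

lemma contDiff_energyFlux₃ (α : ℝ) (hu : ContDiff ℝ 2 u) : ContDiff ℝ 1 (energyFlux₃ α u) := by
  have hu₁ : ContDiff ℝ 1 u := hu.of_le one_le_two
  have hu₂ : ContDiff ℝ (1 + 1) u := hu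
  have hd := contDiff_divg hu₂
  unfold energyFlux₃ twist
  fun_prop

lemma contDiff_energyFlux₅ (α : ℝ) (hu : ContDiff ℝ 2 u) : ContDiff ℝ 1 (energyFlux₅ α u) := by
  have hu₁ : ContDiff ℝ 1 u := hu.of_le one_le_two
  unfold energyFlux₅
  fun_prop

lemma divg_energyFlux₁ (α : ℝ) (hu : ContDiff ℝ 2 u) :
    divg (energyFlux₁ α u) x = u x ⬝ᵥ vecLap u x + ∑ i, ∑ k, jac u x i k ^ 2
      + α * (divg u x ^ 2 + grad (divg u) x ⬝ᵥ u x) := by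
  have hu₁ : ContDiff ℝ 1 u := hu.of_le one_le_two
  have hu₂ : ContDiff ℝ (1 + 1) u := hu
  have hd := contDiff_divg hu₂
  unfold energyFlux₁
  rw [divg_add, divg_const_smul, divg_smul, divg_vecMul_jac _ hu]
  · simp only [sq]
  all_goals exact ContDiff.differentiable (n := 1) (by fun_prop) one_ne_zero x

lemma divg_energyFlux₃ (α : ℝ) (hu : ContDiff ℝ 2 u) :
    divg (energyFlux₃ α u) x =
      anisotropy α * ((x.ofLp ⬝ᵥ u x) * (x.ofLp ⬝ᵥ vecLap u x + divg u x)
          + (x.ofLp ᵥ* jac u x + u x) ⬝ᵥ x.ofLp ᵥ* jac u x)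
        + α * anisotropy α * (3 * ((x.ofLp ⬝ᵥ u x) * divg u x)
          + (divg u x • (x.ofLp ᵥ* jac u x + u x) + (x.ofLp ⬝ᵥ u x) • grad (divg u) x) ⬝ᵥ x.ofLp)
        + 1 / 2 * (3 * (u x ⬝ᵥ u x) + (u x ᵥ* jac u x + u x ᵥ* jac u x) ⬝ᵥ x.ofLp)
        + anisotropy α * ((x.ofLp ⬝ᵥ u x) * divg u x - x.ofLp ⬝ᵥ jac u x *ᵥ u x
          - 2 * (x.ofLp ⬝ᵥ (jac u x).adjugate *ᵥ x.ofLp)) := by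
  have hu₁ : ContDiff ℝ 1 u := hu.of_le one_le_two
  have hu₂ : ContDiff ℝ (1 + 1) u := hu
  have hd := contDiff_divg hu₂
  have htr : ∑ i, ∑ k, (1 : Matrix (Fin 3) (Fin 3) ℝ) i k * jac u x i k = divg u x := by
    simp [Matrix.one_apply, divg, jac]
  have htwist : ContDiff ℝ 1 fun y => twist y.ofLp (u y) (jac u y) := by
    unfold twist
    fun_prop
  unfold energyFlux₃
  rw [divg_add, divg_add, divg_add, divg_const_smul, divg_const_smul, divg_const_smul,
    divg_const_smul, divg_twist hu, divg_smul, divg_smul_ofLp, divg_smul_ofLp, grad_mul,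
    grad_ofLp_dotProduct, grad_dotProduct, divg_vecMul_jac _ hu, jac_ofLp, htr]
  all_goals exact ContDiff.differentiable (n := 1) (by fun_prop) one_ne_zero x

lemma divg_energyFlux₅ (α : ℝ) (hu : ContDiff ℝ 2 u) :
    divg (energyFlux₅ α u) x = 3 / 2 * anisotropy α * (3 * (x.ofLp ⬝ᵥ u x) ^ 2
      + 2 * ((x.ofLp ⬝ᵥ u x) * ((x.ofLp ᵥ* jac u x + u x) ⬝ᵥ x.ofLp))) := by
  have hu₁ : ContDiff ℝ 1 u := hu.of_le one_le_two
  unfold energyFlux₅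
  rw [divg_const_smul, divg_smul_ofLp, grad_mul, grad_ofLp_dotProduct]
  · simp only [add_dotProduct, smul_dotProduct, smul_eq_mul]
    ring
  all_goals exact ContDiff.differentiable (n := 1) (by fun_prop) one_ne_zero x

lemma contDiffAt_energyFlux (α : ℝ) (hu : ContDiff ℝ 2 u) (hx : x ≠ 0) :
    ContDiffAt ℝ 1 (energyFlux α u) x :=
  (((contDiffAt_norm_inv_pow 1 hx).smul (contDiff_energyFlux₁ α hu).contDiffAt).add
    ((contDiffAt_norm_inv_pow 3 hx).smul (contDiff_energyFlux₃ α hu).contDiffAt)).add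
    ((contDiffAt_norm_inv_pow 5 hx).smul (contDiff_energyFlux₅ α hu).contDiffAt)

lemma divg_energyFlux (α : ℝ) (hu : ContDiff ℝ 2 u) (hx : x ≠ 0) :
    divg (energyFlux α u) x =
      ‖x‖⁻¹ * divg (energyFlux₁ α u) x - ‖x‖⁻¹ ^ 3 * (x.ofLp ⬝ᵥ energyFlux₁ α u x)
        + (‖x‖⁻¹ ^ 3 * divg (energyFlux₃ α u) x - 3 * ‖x‖⁻¹ ^ 5 * (x.ofLp ⬝ᵥ energyFlux₃ α u x))
        + (‖x‖⁻¹ ^ 5 * divg (energyFlux₅ α u) x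
          - 5 * ‖x‖⁻¹ ^ 7 * (x.ofLp ⬝ᵥ energyFlux₅ α u x)) := by
  have h₁ := (contDiff_energyFlux₁ α hu).differentiable one_ne_zero x
  have h₃ := (contDiff_energyFlux₃ α hu).differentiable one_ne_zero x
  have h₅ := (contDiff_energyFlux₅ α hu).differentiable one_ne_zero x
  have hw : ∀ m, DifferentiableAt ℝ (fun y : E3 => ‖y‖⁻¹ ^ m) x := fun m =>
    (contDiffAt_norm_inv_pow (n := 1) m hx).differentiableAt one_ne_zero
  unfold energyFlux
  rw [divg_add (((hw 1).fun_smul h₁).fun_add ((hw 3).fun_smul h₃)) ((hw 5).fun_smul h₅),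
    divg_add ((hw 1).fun_smul h₁) ((hw 3).fun_smul h₃), divg_norm_inv_pow_smul 1 hx h₁,
    divg_norm_inv_pow_smul 3 hx h₃, divg_norm_inv_pow_smul 5 hx h₅]
  norm_num

lemma dotProduct_ofLp_self {ι : Type*} [Fintype ι] (x : EuclideanSpace ℝ ι) :
    x.ofLp ⬝ᵥ x.ofLp = ‖x‖ ^ 2 := by
  rw [EuclideanSpace.real_norm_sq_eq]
  simp only [dotProduct, sq]

/-- The density `|x|⁻¹ (Lu) · (u + α/(α+2) |x|⁻² (x · u) x)`, which is `(Lu) · (Φu)` without the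
factor `c_α`. -/
def energyDensity (α : ℝ) (u : E3 → Fin 3 → ℝ) (x : E3) : ℝ :=
  ‖x‖⁻¹ * (lame α u x ⬝ᵥ (u x + (anisotropy α * ‖x‖⁻¹ ^ 2 * (x.ofLp ⬝ᵥ u x)) • x.ofLp))

lemma energyDensity_eq_sub_divg_energyFlux {α : ℝ} (hα : α + 2 ≠ 0) (hu : ContDiff ℝ 2 u)
    (hx : x ≠ 0) :
    energyDensity α u x =
      ‖x‖⁻¹ * energyForm α (jac u x) (‖x‖⁻¹ • x.ofLp) - divg (energyFlux α u) x := by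
  have hκ : anisotropy α * (α + 2) = α := div_mul_cancel₀ α hα
  have hr : (x.ofLp ⬝ᵥ x.ofLp) * ‖x‖⁻¹ ^ 2 = 1 := by
    rw [dotProduct_ofLp_self, ← mul_pow, mul_inv_cancel₀ (norm_ne_zero_iff.2 hx), one_pow]
  have htr : (jac u x).trace = divg u x := rfl
  have htwist : x.ofLp ⬝ᵥ twist x.ofLp (u x) (jac u x) = 0 := dot_self_cross _ _
  rw [energyDensity, divg_energyFlux α hu hx, divg_energyFlux₁ α hu, divg_energyFlux₃ α hu,
    divg_energyFlux₅ α hu, lame_eq_vecLap_add_grad]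
  simp only [energyForm, energyFlux₁, energyFlux₃, energyFlux₅, dotProduct_add, add_dotProduct,
    smul_dotProduct, dotProduct_smul, sub_dotProduct, neg_dotProduct, smul_eq_mul, htwist, htr,
    Matrix.dotProduct_mulVec, Matrix.smul_vecMul, dotProduct_comm x.ofLp (_ ᵥ* _),
    dotProduct_comm (u x) (vecLap u x), dotProduct_comm x.ofLp (vecLap u x),
    dotProduct_comm (u x) x.ofLp, dotProduct_comm (u x) (x.ofLp ᵥ* _)]
  linear_combination ‖x‖⁻¹ ^ 3 * (x.ofLp ⬝ᵥ u x) * divg u x * hκ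
    - (3 * ‖x‖⁻¹ ^ 3 * (α * anisotropy α * (x.ofLp ⬝ᵥ u x) * divg u x + 1 / 2 * (u x ⬝ᵥ u x))
      + 15 / 2 * ‖x‖⁻¹ ^ 5 * anisotropy α * (x.ofLp ⬝ᵥ u x) ^ 2) * hr

section EnergyIdentity

variable {α : ℝ} {u : E3 → Fin 3 → ℝ} {x : E3}

@[fun_prop]
lemma continuous_crossProduct {X : Type*} [TopologicalSpace X] {v w : X → Fin 3 → ℝ}
    (hv : Continuous v) (hw : Continuous w) : Continuous fun p => v p ⨯₃ w p :=
  (contDiff_crossProduct contDiff_fst contDiff_snd :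
    ContDiff ℝ 0 fun z : (Fin 3 → ℝ) × (Fin 3 → ℝ) => z.1 ⨯₃ z.2).continuous.comp (hv.prodMk hw)

lemma continuous_jac (hu : ContDiff ℝ 1 u) : Continuous (jac u) :=
  continuous_matrix fun i k => (contDiff_jac_apply (n := 0) hu i k).continuous

lemma continuous_lame (α : ℝ) (hu : ContDiff ℝ 2 u) : Continuous (lame α u) := by
  have hpd : ∀ {f : E3 → ℝ}, ContDiff ℝ 1 f → ∀ k, Continuous (pd k f) := fun hf k =>
    (contDiff_pd (n := 0) hf k).continuous
  refine continuous_pi fun i => .sub (.neg ?_) (.const_mul (hpd (contDiff_divg hu) i) α)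
  exact continuous_finsetSum _ fun k _ => hpd (contDiff_jac_apply hu i k) k

lemma jac_of_notMem_tsupport (hx : x ∉ tsupport u) : jac u x = 0 := by
  ext i k
  have hu : (fun y => u y i) =ᶠ[nhds x] fun _ => 0 :=
    (notMem_tsupport_iff_eventuallyEq.1 hx).fun_comp fun a => a i
  simp [jac, pd, hu.fderiv_eq]

@[fun_prop]
lemma continuous_energyForm {X : Type*} [TopologicalSpace X] {G : X → Matrix (Fin 3) (Fin 3) ℝ}
    {y : X → Fin 3 → ℝ} (hG : Continuous G) (hy : Continuous y) :
    Continuous fun p => energyForm α (G p) (y p) := by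
  unfold energyForm
  fun_prop

/-- The field `|x|² energyFlux` in polar form, with `ρ`, `a`, `G`, `y` standing for `|x|`, `u`,
`Du`, `x/|x|`. -/
def polarEnergyFlux (α ρ : ℝ) (a : Fin 3 → ℝ) (G : Matrix (Fin 3) (Fin 3) ℝ) (y : Fin 3 → ℝ) :
    Fin 3 → ℝ :=
  ρ • (a ᵥ* G + α • (G.trace • a) + anisotropy α • (y ⬝ᵥ a) • y ᵥ* G
      + (α * anisotropy α) • ((y ⬝ᵥ a) * G.trace) • y + anisotropy α • twist y a G)
    + (1 / 2 * (a ⬝ᵥ a) + 3 / 2 * anisotropy α * (y ⬝ᵥ a) ^ 2) • y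

lemma energyFlux_eq_polarEnergyFlux (hx : x ≠ 0) :
    energyFlux α u x =
      ‖x‖⁻¹ ^ 2 • polarEnergyFlux α ‖x‖ (u x) (jac u x) (‖x‖⁻¹ • x.ofLp) := by
  have hρ : ‖x‖ * ‖x‖⁻¹ = 1 := mul_inv_cancel₀ (norm_ne_zero_iff.2 hx)
  have htr : (jac u x).trace = divg u x := rfl
  ext k
  simp only [energyFlux, energyFlux₁, energyFlux₃, energyFlux₅, polarEnergyFlux, twist, htr,
    smul_dotProduct, Matrix.smul_vecMul, map_smul, LinearMap.smul_apply, Pi.add_apply,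
    Pi.smul_apply, smul_eq_mul]
  linear_combination -(‖x‖⁻¹ * ((u x ᵥ* jac u x) k + α * divg u x * u x k)
    + ‖x‖⁻¹ ^ 3 * anisotropy α * ((x.ofLp ⬝ᵥ u x) * (x.ofLp ᵥ* jac u x) k
      + α * (x.ofLp ⬝ᵥ u x) * divg u x * x k
      + (x.ofLp ⨯₃ ((x.ofLp ⨯₃ u x) ᵥ* jac u x)) k)) * hρ

@[fun_prop]
lemma continuous_polarEnergyFlux {X : Type*} [TopologicalSpace X] {ρ : X → ℝ}
    {a y : X → Fin 3 → ℝ} {G : X → Matrix (Fin 3) (Fin 3) ℝ} (hρ : Continuous ρ)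
    (ha : Continuous a) (hG : Continuous G) (hy : Continuous y) :
    Continuous fun p => polarEnergyFlux α (ρ p) (a p) (G p) (y p) := by
  unfold polarEnergyFlux twist
  fun_prop

lemma integrable_energyFlux (α : ℝ) (hu : ContDiff ℝ 1 u) (hs : HasCompactSupport u) (k : Fin 3) :
    Integrable fun x => energyFlux α u x k := by
  have hu₀ := hu.continuous
  have hG := continuous_jac hu
  refine (integrable_norm_inv_pow_mul (j := 2) (by simp)
    (Ψ := fun x y => polarEnergyFlux α ‖x‖ (u x) (jac u x) y.ofLp k)
    (by unfold Function.uncurry; fun_prop) hs.isCompact fun x hx y => ?_).congr ?_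
  · simp [polarEnergyFlux, twist, image_eq_zero_of_notMem_tsupport hx, jac_of_notMem_tsupport hx]
  · filter_upwards [Measure.ae_ne volume (0 : E3)] with x hx
    simp [energyFlux_eq_polarEnergyFlux hx]

lemma integral_sphMeas_dotProduct_polarEnergyFlux_zero (α : ℝ) (a : Fin 3 → ℝ)
    (G : Matrix (Fin 3) (Fin 3) ℝ) :
    ∫ ω, (ω : E3).ofLp ⬝ᵥ polarEnergyFlux α 0 a G (ω : E3).ofLp ∂sphMeas =
      2 * π * (1 + anisotropy α) * (a ⬝ᵥ a) := by
  have hpt : ∀ ω : sphere (0 : E3) 1,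
      (ω : E3).ofLp ⬝ᵥ polarEnergyFlux α 0 a G (ω : E3).ofLp =
        1 / 2 * (a ⬝ᵥ a) + 3 / 2 * anisotropy α * (a ⬝ᵥ (ω : E3).ofLp) ^ 2 := fun ω => by
    rw [polarEnergyFlux, zero_smul, zero_add, dotProduct_smul,
      dotProduct_ofLp_self (ω : E3), norm_eq_of_mem_sphere, dotProduct_comm (ω : E3).ofLp a]
    simp
  have hint : Integrable (fun ω : sphere (0 : E3) 1 => (a ⬝ᵥ (ω : E3).ofLp) ^ 2) sphMeas :=
    integrable_sphere (by fun_prop)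
  simp only [hpt]
  rw [integral_add (integrable_const _) (hint.const_mul _), integral_const, integral_const_mul,
    integral_sphMeas_dotProduct_sq, sphMeas_real_univ, smul_eq_mul]
  ring

lemma tendsto_outwardFlux_energyFlux (α : ℝ) (hu : ContDiff ℝ 1 u) :
    Tendsto (outwardFlux fun k x => energyFlux α u x k) (nhdsWithin 0 (Set.Ioi 0))
      (nhds (2 * π * (1 + anisotropy α) * (u 0 ⬝ᵥ u 0))) := by
  have hu₀ := hu.continuous
  have hG := continuous_jac hu
  have hcont : Continuous fun r : ℝ => ∫ ω : sphere (0 : E3) 1, (ω : E3).ofLp ⬝ᵥ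
      polarEnergyFlux α ‖r • (ω : E3)‖ (u (r • (ω : E3))) (jac u (r • (ω : E3))) (ω : E3).ofLp
        ∂sphMeas :=
    continuous_integral_sphere (f := fun r (y : E3) => y.ofLp ⬝ᵥ
      polarEnergyFlux α ‖r • y‖ (u (r • y)) (jac u (r • y)) y.ofLp)
      (by unfold Function.uncurry; fun_prop)
  have h0 := hcont.tendsto 0
  simp only [zero_smul, norm_zero, integral_sphMeas_dotProduct_polarEnergyFlux_zero] at h0
  refine (h0.mono_left nhdsWithin_le_nhds).congr' ?_
  filter_upwards [self_mem_nhdsWithin] with r (hr : 0 < r)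
  unfold outwardFlux
  rw [← integral_const_mul]
  refine integral_congr_ae (.of_forall fun ω => ?_)
  have hnorm : ‖r • (ω : E3)‖ = r := by simp [norm_smul, hr.le]
  have hne : r • (ω : E3) ≠ 0 := norm_ne_zero_iff.1 (hnorm.trans_ne hr.ne')
  simp only [energyFlux_eq_polarEnergyFlux hne, hnorm, WithLp.ofLp_smul, inv_smul_smul₀ hr.ne',
    dotProduct]
  simp only [Fintype.card_fin, Nat.add_one_sub_one, Pi.smul_apply, smul_eq_mul, Finset.mul_sum]
  field_simp

lemma sum_lame_mul_Phi_mul (α : ℝ) (u : E3 → Fin 3 → ℝ) (x : E3) :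
    ∑ i, ∑ j, lame α u x i * Phi α x i j * u x j = cA α * energyDensity α u x := by
  simp only [energyDensity, Phi, anisotropy, dotProduct, Fin.sum_univ_three, Fin.reduceEq, if_true,
    if_false, Pi.add_apply, Pi.smul_apply, smul_eq_mul]
  ring

lemma integrable_energyDensity (α : ℝ) (hu : ContDiff ℝ 2 u) (hs : HasCompactSupport u) :
    Integrable (energyDensity α u) := by
  have hu₀ := hu.continuous
  have hL := continuous_lame α hu
  refine (integrable_norm_inv_pow_mul (j := 1) (by simp)
    (Ψ := fun x (y : E3) =>
      lame α u x ⬝ᵥ (u x + (anisotropy α * (y.ofLp ⬝ᵥ u x)) • y.ofLp))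
    (by unfold Function.uncurry; fun_prop) hs.isCompact fun x hx y => ?_).congr (.of_forall ?_)
  · simp [image_eq_zero_of_notMem_tsupport hx]
  · intro x
    simp only [energyDensity, WithLp.ofLp_smul, smul_dotProduct, smul_smul, smul_eq_mul]
    rw [pow_one, show anisotropy α * (‖x‖⁻¹ * (x.ofLp ⬝ᵥ u x)) * ‖x‖⁻¹ =
      anisotropy α * ‖x‖⁻¹ ^ 2 * (x.ofLp ⬝ᵥ u x) by ring]

lemma integrable_norm_inv_mul_energyForm (α : ℝ) (hu : ContDiff ℝ 1 u)
    (hs : HasCompactSupport u) :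
    Integrable fun x => ‖x‖⁻¹ * energyForm α (jac u x) (‖x‖⁻¹ • x.ofLp) := by
  have hG := continuous_jac hu
  refine (integrable_norm_inv_pow_mul (j := 1) (by simp)
    (Ψ := fun x y => energyForm α (jac u x) y.ofLp)
    (by unfold Function.uncurry; fun_prop) hs.isCompact fun x hx y => ?_).congr (.of_forall ?_)
  · simp [energyForm, jac_of_notMem_tsupport hx, Matrix.adjugate_zero]
  · intro x
    simp

lemma hasCompactSupport_energyFlux (α : ℝ) (hs : HasCompactSupport u) (k : Fin 3) :
    HasCompactSupport fun x => energyFlux α u x k := by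
  refine .intro hs.isCompact fun x hx => ?_
  simp [energyFlux, energyFlux₁, energyFlux₃, energyFlux₅, twist,
    image_eq_zero_of_notMem_tsupport hx]

/-- The integral of the energy form of `Du` over the sphere of radius `r`, with respect to the
surface measure of the unit sphere. -/
def sphericalEnergy (α : ℝ) (u : E3 → Fin 3 → ℝ) (r : ℝ) : ℝ :=
  ∫ ω : sphere (0 : E3) 1, energyForm α (jac u (r • (ω : E3))) (ω : E3).ofLp ∂sphMeas

lemma pow_smul_integral_sphere_norm_inv_mul_energyForm {r : ℝ} (hr : 0 < r) :
    r ^ (Module.finrank ℝ E3 - 1) • ∫ ω : sphere (0 : E3) 1, ‖r • (ω : E3)‖⁻¹ *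
      energyForm α (jac u (r • (ω : E3))) (‖r • (ω : E3)‖⁻¹ • (r • (ω : E3)).ofLp) ∂sphMeas =
    r * sphericalEnergy α u r := by
  have hnorm (ω : sphere (0 : E3) 1) : ‖r • (ω : E3)‖ = r := by simp [norm_smul, hr.le]
  simp only [hnorm, WithLp.ofLp_smul, inv_smul_smul₀ hr.ne', integral_const_mul,
    finrank_euclideanSpace_fin, sphericalEnergy, smul_eq_mul]
  field_simp

lemma cA_nonneg (hα : -1 < α) : 0 ≤ cA α :=
  div_nonneg (by linarith) (mul_nonneg (by positivity) (by linarith))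

lemma cA_mul_two_pi_mul_one_add_anisotropy (hα : -1 < α) :
    cA α * (2 * π * (1 + anisotropy α)) = 1 / 2 := by
  have h1 : α + 1 ≠ 0 := by linarith
  have h2 : α + 2 ≠ 0 := by linarith
  unfold cA anisotropy
  field_simp
  ring

lemma integrableOn_mul_sphericalEnergy (α : ℝ) (hu : ContDiff ℝ 1 u) (hs : HasCompactSupport u) :
    IntegrableOn (fun r => r * sphericalEnergy α u r) (Set.Ioi 0) :=
  (integrableOn_pow_smul_integral_sphere (integrable_norm_inv_mul_energyForm α hu hs)).congr_fun
    (fun _ => pow_smul_integral_sphere_norm_inv_mul_energyForm) measurableSet_Ioi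

lemma integral_energyDensity (hα : -1 < α) (hu : ContDiff ℝ 2 u) (hs : HasCompactSupport u) :
    ∫ x, energyDensity α u x =
      2 * π * (1 + anisotropy α) * (u 0 ⬝ᵥ u 0) +
        ∫ r in Set.Ioi (0 : ℝ), r * sphericalEnergy α u r := by
  have hu₁ : ContDiff ℝ 1 u := hu.of_le one_le_two
  have hW := integrable_norm_inv_mul_energyForm α hu₁ hs
  have hae : (fun x => ‖x‖⁻¹ * energyForm α (jac u x) (‖x‖⁻¹ • x.ofLp) - energyDensity α u x)
      =ᵐ[volume] divg (energyFlux α u) := by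
    filter_upwards [Measure.ae_ne volume (0 : E3)] with x hx
    rw [energyDensity_eq_sub_divg_energyFlux (by linarith) hu hx, sub_sub_cancel]
  have hdiv : Integrable (divg (energyFlux α u)) :=
    (hW.sub (integrable_energyDensity α hu hs)).congr hae
  have hflux : ∫ x, divg (energyFlux α u) x = -(2 * π * (1 + anisotropy α) * (u 0 ⬝ᵥ u 0)) :=
    integral_divergence_eq_neg_of_tendsto_outwardFlux
      (fun k x hx => contDiffAt_pi.1 (contDiffAt_energyFlux α hu hx) k)
      (hasCompactSupport_energyFlux α hs) (integrable_energyFlux α hu₁ hs) hdiv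
      (tendsto_outwardFlux_energyFlux α hu₁)
  rw [← integral_congr_ae hae, integral_sub hW (integrable_energyDensity α hu hs),
    integral_eq_integral_pow_smul_integral_sphere hW, setIntegral_congr_fun measurableSet_Ioi
      fun _ => pow_smul_integral_sphere_norm_inv_mul_energyForm] at hflux
  linarith

theorem integral_lame_mul_Phi_mul (hα : -1 < α) (hu : ContDiff ℝ 2 u) (hs : HasCompactSupport u) :
    ∫ x : E3, ∑ i, ∑ j, lame α u x i * Phi α x i j * u x j =
      1 / 2 * (u 0 ⬝ᵥ u 0) + cA α * ∫ r in Set.Ioi (0 : ℝ), r * sphericalEnergy α u r := by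
  simp only [sum_lame_mul_Phi_mul, integral_const_mul, integral_energyDensity hα hu hs]
  linear_combination (u 0 ⬝ᵥ u 0) * cA_mul_two_pi_mul_one_add_anisotropy hα

end EnergyIdentity

/-! ### The energy inequality on a single sphere -/

section FrobeniusNorm

open scoped Matrix.Norms.Frobenius

variable {m n : Type*} [Fintype m] [Fintype n]

lemma frobenius_norm_sq (H : Matrix m n ℝ) : ‖H‖ ^ 2 = ∑ i, ∑ k, H i k ^ 2 := by
  rw [Matrix.frobenius_norm_def, ← sqrt_eq_rpow, sq_sqrt (by positivity)]
  simp only [norm_eq_abs, rpow_ofNat, sq_abs]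

lemma norm_toLp_vecMul_le (y : EuclideanSpace ℝ m) (H : Matrix m n ℝ) :
    ‖WithLp.toLp 2 (y.ofLp ᵥ* H)‖ ≤ ‖y‖ * ‖H‖ := by
  have h := Matrix.frobenius_norm_mul (Matrix.replicateRow Unit y.ofLp) H
  rwa [← Matrix.replicateRow_vecMul, Matrix.frobenius_norm_replicateRow,
    Matrix.frobenius_norm_replicateRow] at h

lemma abs_dotProduct_mulVec_le (y : EuclideanSpace ℝ m) (H : Matrix m n ℝ)
    (z : EuclideanSpace ℝ n) : |y.ofLp ⬝ᵥ H *ᵥ z.ofLp| ≤ ‖y‖ * ‖H‖ * ‖z‖ := by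
  rw [Matrix.dotProduct_mulVec]
  calc |y.ofLp ᵥ* H ⬝ᵥ z.ofLp|
      = |inner ℝ z (WithLp.toLp 2 (y.ofLp ᵥ* H))| := by
        simp [EuclideanSpace.inner_eq_star_dotProduct]
    _ ≤ ‖z‖ * ‖WithLp.toLp 2 (y.ofLp ᵥ* H)‖ := abs_real_inner_le_norm _ _
    _ ≤ ‖z‖ * (‖y‖ * ‖H‖) := by gcongr; exact norm_toLp_vecMul_le y H
    _ = ‖y‖ * ‖H‖ * ‖z‖ := mul_comm _ _

lemma trace_sq_le_card_mul_frobenius_norm_sq (H : Matrix n n ℝ) :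
    H.trace ^ 2 ≤ Fintype.card n * ‖H‖ ^ 2 := by
  rw [frobenius_norm_sq]
  calc H.trace ^ 2 ≤ Fintype.card n * ∑ i, H i i ^ 2 := sq_sum_le_card_mul_sum_sq
    _ ≤ Fintype.card n * ∑ i, ∑ k, H i k ^ 2 := by
      gcongr with i
      exact Finset.single_le_sum (f := fun k => H i k ^ 2) (fun k _ => sq_nonneg _)
        (Finset.mem_univ i)

-- If the rows of `A` are the cross products of `y` with the rows of `H`, then the difference of the
-- two sides is `(tr A)² + |A - Aᵀ|² / 2`.
lemma neg_dotProduct_self_mul_sum_sq_le_adjugate (H : Matrix (Fin 3) (Fin 3) ℝ)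
    (y : Fin 3 → ℝ) :
    H *ᵥ y ⬝ᵥ H *ᵥ y - (y ⬝ᵥ y) * ∑ i, ∑ k, H i k ^ 2 ≤ 2 * (y ⬝ᵥ H.adjugate *ᵥ y) := by
  let A : Matrix (Fin 3) (Fin 3) ℝ := Matrix.of fun i => y ⨯₃ H i
  have hA : 2 * (y ⬝ᵥ H.adjugate *ᵥ y) - (H *ᵥ y ⬝ᵥ H *ᵥ y - (y ⬝ᵥ y) * ∑ i, ∑ k, H i k ^ 2) =
      A.trace ^ 2 + (A 0 1 - A 1 0) ^ 2 + (A 0 2 - A 2 0) ^ 2 + (A 1 2 - A 2 1) ^ 2 := by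
    simp only [A, Matrix.trace, Matrix.diag_apply, Matrix.of_apply, Matrix.adjugate_fin_three,
      cross_apply, dotProduct, Matrix.mulVec, Fin.sum_univ_three, Matrix.cons_val]
    ring
  rw [← sub_nonneg, hA]
  positivity

end FrobeniusNorm

section PointwiseBound

open scoped Matrix.Norms.Frobenius

variable {α : ℝ} {y : E3} {H : Matrix (Fin 3) (Fin 3) ℝ}

lemma three_mul_Bminus_zero_zero_sub_one (hα : -1 < α) :
    3 * (Bminus α 0 0 - 1) = anisotropy α + α + α * anisotropy α := by
  have : α + 2 ≠ 0 := by linarith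
  have hB : Bminus α 0 0 = 1 + (α / 3) * ((2 * α + 3) / (α + 2)) := rfl
  rw [hB, anisotropy]
  field

lemma two_mul_sqrt_three_mul_Bminus_zero_one (hα : -1 < α) :
    2 * √3 * Bminus α 0 1 = α + (2 * α + α * anisotropy α) * √3 := by
  have : α + 2 ≠ 0 := by linarith
  have hB : Bminus α 0 1 = (α / 2) * ((3 * α + 4) / (α + 2)) + α / (2 * √3) := rfl
  rw [hB, anisotropy]
  field

lemma anisotropy_nonpos (hα₁ : -1 < α) (hα₂ : α ≤ 0) : anisotropy α ≤ 0 :=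
  div_nonpos_of_nonpos_of_nonneg hα₂ (by linarith)

lemma two_mul_add_mul_anisotropy_nonpos (hα₁ : -1 < α) (hα₂ : α ≤ 0) :
    2 * α + α * anisotropy α ≤ 0 := by
  have : -2 ≤ anisotropy α := by
    rw [anisotropy, le_div_iff₀ (by linarith)]
    linarith
  nlinarith

lemma Bminus_zero_one_nonpos (hα₁ : -1 < α) (hα₂ : α ≤ 0) : Bminus α 0 1 ≤ 0 := by
  have h := mul_nonpos_of_nonpos_of_nonneg (two_mul_add_mul_anisotropy_nonpos hα₁ hα₂)
    (sqrt_nonneg 3)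
  have : 2 * √3 * Bminus α 0 1 ≤ 0 := by
    rw [two_mul_sqrt_three_mul_Bminus_zero_one hα₁]
    linarith
  exact nonpos_of_mul_nonpos_right this (by positivity)

lemma Bminus_one_one_le (hα₁ : -1 < α) (hα₂ : α ≤ 0) :
    Bminus α 1 1 ≤ 1 + 3 * α + 2 * anisotropy α - √3 * (α * anisotropy α) := by
  have h : 1 ≤ (1 + √3) / √2 := by
    rw [one_le_div (by positivity)]
    linarith [sqrt_le_sqrt (show (2 : ℝ) ≤ 3 by norm_num)]
  have hB : Bminus α 1 1 = 1 + 3 * α + anisotropy α * (1 + (1 + √3) / √2 - √3 * α) := rfl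
  linarith [mul_le_mul_of_nonpos_left h (anisotropy_nonpos hα₁ hα₂)]

lemma abs_trace_le_sqrt_three_mul_norm (H : Matrix (Fin 3) (Fin 3) ℝ) :
    |H.trace| ≤ √3 * ‖H‖ := by
  have h := trace_sq_le_card_mul_frobenius_norm_sq H
  refine abs_le_of_sq_le_sq ?_ (by positivity)
  simpa [mul_pow] using h

lemma mul_norm_sq_le_energyForm (hα₁ : -1 < α) (hα₂ : α ≤ 0) (hy : ‖y‖ = 1) :
    (1 + 3 * α + 2 * anisotropy α - √3 * (α * anisotropy α)) * ‖H‖ ^ 2 ≤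
      energyForm α H y.ofLp := by
  have hκ := anisotropy_nonpos hα₁ hα₂
  have hq : |y.ofLp ⬝ᵥ H *ᵥ y.ofLp| ≤ ‖H‖ := by simpa [hy] using abs_dotProduct_mulVec_le y H y
  have htq : -(√3 * ‖H‖ * ‖H‖) ≤ H.trace * (y.ofLp ⬝ᵥ H *ᵥ y.ofLp) := by
    refine (abs_le.1 ?_).1
    rw [abs_mul]
    gcongr
    exact abs_trace_le_sqrt_three_mul_norm H
  have hrow : y.ofLp ᵥ* H ⬝ᵥ y.ofLp ᵥ* H ≤ ‖H‖ ^ 2 := by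
    rw [← WithLp.ofLp_toLp 2 (y.ofLp ᵥ* H), dotProduct_ofLp_self]
    gcongr
    simpa [hy] using norm_toLp_vecMul_le y H
  have htr : H.trace ^ 2 ≤ 3 * ‖H‖ ^ 2 := by
    simpa using trace_sq_le_card_mul_frobenius_norm_sq H
  have hadj : -‖H‖ ^ 2 ≤ 2 * (y.ofLp ⬝ᵥ H.adjugate *ᵥ y.ofLp) := by
    have h := neg_dotProduct_self_mul_sum_sq_le_adjugate H y.ofLp
    rw [dotProduct_ofLp_self y, hy, ← frobenius_norm_sq] at h
    have h₀ : 0 ≤ H *ᵥ y.ofLp ⬝ᵥ H *ᵥ y.ofLp := dotProduct_self_star_nonneg _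
    linarith
  rw [energyForm, ← frobenius_norm_sq]
  linarith [mul_le_mul_of_nonpos_left hrow hκ, mul_le_mul_of_nonpos_left htr hα₂,
    mul_le_mul_of_nonneg_left htq (mul_nonneg_of_nonpos_of_nonpos hα₂ hκ),
    mul_le_mul_of_nonpos_left hadj hκ]

-- Both sides are minus the determinant of the matrix bordered by `y`, to which `a ⊗ y` adds
-- multiples of the border row.
lemma dotProduct_adjugate_vecMulVec_add_mulVec (a y : Fin 3 → ℝ) (H : Matrix (Fin 3) (Fin 3) ℝ) :
    y ⬝ᵥ (Matrix.vecMulVec a y + H).adjugate *ᵥ y = y ⬝ᵥ H.adjugate *ᵥ y := by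
  simp only [Matrix.adjugate_fin_three, Matrix.add_apply, Matrix.vecMulVec_apply, Matrix.of_apply,
    dotProduct, Matrix.mulVec, Fin.sum_univ_three, Matrix.cons_val]
  ring

lemma energyForm_vecMulVec_add (hα : -1 < α) (a : Fin 3 → ℝ) (hy : ‖y‖ = 1) :
    energyForm α (Matrix.vecMulVec a y.ofLp + H) y.ofLp =
      a ⬝ᵥ a + 2 * (a ⬝ᵥ H *ᵥ y.ofLp)
        + (anisotropy α + α + α * anisotropy α) * (a ⬝ᵥ y.ofLp) ^ 2
        + α * ((a ⬝ᵥ y.ofLp) * (y.ofLp ⬝ᵥ H *ᵥ y.ofLp))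
        + (2 * α + α * anisotropy α) * ((a ⬝ᵥ y.ofLp) * H.trace) + energyForm α H y.ofLp := by
  have hyy : y.ofLp ⬝ᵥ y.ofLp = 1 := by rw [dotProduct_ofLp_self, hy, one_pow]
  have hκ : anisotropy α * (α + 2) = α := div_mul_cancel₀ α (by linarith)
  have hsq : ∑ i, ∑ k, (Matrix.vecMulVec a y.ofLp + H) i k ^ 2 =
      (a ⬝ᵥ a) * (y.ofLp ⬝ᵥ y.ofLp) + 2 * (a ⬝ᵥ H *ᵥ y.ofLp) + ∑ i, ∑ k, H i k ^ 2 := by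
    simp only [Matrix.add_apply, Matrix.vecMulVec_apply, dotProduct, Matrix.mulVec,
      Fin.sum_univ_three]
    ring
  simp only [energyForm, hsq, dotProduct_adjugate_vecMulVec_add_mulVec, Matrix.vecMul_add,
    Matrix.add_mulVec, Matrix.vecMul_vecMulVec, Matrix.vecMulVec_mulVec, Matrix.trace_add,
    Matrix.trace_vecMulVec, add_dotProduct, dotProduct_add, hyy, smul_dotProduct, dotProduct_smul,
    MulOpposite.op_one, one_smul, smul_eq_mul, dotProduct_comm y.ofLp a,
    dotProduct_comm y.ofLp (_ ᵥ* _), ← Matrix.dotProduct_mulVec]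
  linear_combination (a ⬝ᵥ y.ofLp) * (y.ofLp ⬝ᵥ H *ᵥ y.ofLp) * hκ

lemma le_energyForm_vecMulVec_add (hα₁ : -1 < α) (hα₂ : α ≤ 0) (a : Fin 3 → ℝ)
    (H : Matrix (Fin 3) (Fin 3) ℝ) (hy : ‖y‖ = 1) :
    a ⬝ᵥ a + 2 * (a ⬝ᵥ H *ᵥ y.ofLp) + 3 * (Bminus α 0 0 - 1) * (a ⬝ᵥ y.ofLp) ^ 2
        + 2 * √3 * Bminus α 0 1 * (|a ⬝ᵥ y.ofLp| * ‖H‖) + Bminus α 1 1 * ‖H‖ ^ 2 ≤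
      energyForm α (Matrix.vecMulVec a y.ofLp + H) y.ofLp := by
  have hq : (a ⬝ᵥ y.ofLp) * (y.ofLp ⬝ᵥ H *ᵥ y.ofLp) ≤ |a ⬝ᵥ y.ofLp| * ‖H‖ := by
    refine (le_abs_self _).trans ((abs_mul _ _).trans_le ?_)
    gcongr
    simpa [hy] using abs_dotProduct_mulVec_le y H y
  have ht : (a ⬝ᵥ y.ofLp) * H.trace ≤ |a ⬝ᵥ y.ofLp| * (√3 * ‖H‖) := by
    refine (le_abs_self _).trans ((abs_mul _ _).trans_le ?_)
    gcongr
    exact abs_trace_le_sqrt_three_mul_norm H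
  have hB : Bminus α 1 1 * ‖H‖ ^ 2 ≤ energyForm α H y.ofLp :=
    (mul_le_mul_of_nonneg_right (Bminus_one_one_le hα₁ hα₂) (sq_nonneg _)).trans
      (mul_norm_sq_le_energyForm hα₁ hα₂ hy)
  rw [energyForm_vecMulVec_add hα₁ a hy, three_mul_Bminus_zero_zero_sub_one hα₁,
    two_mul_sqrt_three_mul_Bminus_zero_one hα₁]
  linarith [mul_le_mul_of_nonpos_left hq hα₂,
    mul_le_mul_of_nonpos_left ht (two_mul_add_mul_anisotropy_nonpos hα₁ hα₂)]

end PointwiseBound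

section SphereInequality

lemma integral_abs_mul_abs_le_sqrt_mul_sqrt {Ω : Type*} [MeasurableSpace Ω] {μ : Measure Ω}
    {f g : Ω → ℝ} (hf : MemLp f 2 μ) (hg : MemLp g 2 μ) :
    ∫ x, |f x| * |g x| ∂μ ≤ √(∫ x, f x ^ 2 ∂μ) * √(∫ x, g x ^ 2 ∂μ) := by
  have h := integral_mul_norm_le_Lp_mul_Lq (μ := μ) (f := f) (g := g) .two_two
    (by simpa using hf) (by simpa using hg)
  simpa only [norm_eq_abs, rpow_two, sq_abs, ← sqrt_eq_rpow] using h

lemma integral_const_dotProduct {Ω ι : Type*} [MeasurableSpace Ω] {μ : Measure Ω} [Fintype ι]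
    (a : ι → ℝ) {f : Ω → ι → ℝ} (hf : Integrable f μ) :
    ∫ x, a ⬝ᵥ f x ∂μ = a ⬝ᵥ ∫ x, f x ∂μ :=
  (dotProductBilin ℝ ℝ a).toContinuousLinearMap.integral_comp_comm hf

open scoped Matrix.Norms.Frobenius

variable {α : ℝ} {a : Fin 3 → ℝ} {H : sphere (0 : E3) 1 → Matrix (Fin 3) (Fin 3) ℝ}

lemma integral_abs_dotProduct_mul_norm_le (a : Fin 3 → ℝ) (hH : Continuous H) :
    √3 * ∫ ω : sphere (0 : E3) 1, |a ⬝ᵥ (ω : E3).ofLp| * ‖H ω‖ ∂sphMeas ≤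
      √(4 * π * (a ⬝ᵥ a)) * √(∫ ω, ‖H ω‖ ^ 2 ∂sphMeas) := by
  have hCS := integral_abs_mul_abs_le_sqrt_mul_sqrt (μ := sphMeas)
    (f := fun ω : sphere (0 : E3) 1 => a ⬝ᵥ (ω : E3).ofLp) (g := fun ω => ‖H ω‖)
    (Continuous.memLp_of_hasCompactSupport (by fun_prop) (.of_compactSpace _))
    (Continuous.memLp_of_hasCompactSupport (by fun_prop) (.of_compactSpace _))
  simp only [abs_norm] at hCS
  rw [integral_sphMeas_dotProduct_sq] at hCS
  calc √3 * ∫ ω : sphere (0 : E3) 1, |a ⬝ᵥ (ω : E3).ofLp| * ‖H ω‖ ∂sphMeas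
      ≤ √3 * (√(4 * π / 3 * (a ⬝ᵥ a)) * √(∫ ω, ‖H ω‖ ^ 2 ∂sphMeas)) := by gcongr
    _ = √(4 * π * (a ⬝ᵥ a)) * √(∫ ω, ‖H ω‖ ^ 2 ∂sphMeas) := by
      rw [← mul_assoc, ← sqrt_mul (by norm_num)]
      ring_nf

lemma dotProduct_Bminus_mulVec_self (w : Fin 2 → ℝ) :
    w ⬝ᵥ Bminus α *ᵥ w =
      Bminus α 0 0 * w 0 ^ 2 + 2 * Bminus α 0 1 * (w 0 * w 1) + Bminus α 1 1 * w 1 ^ 2 := by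
  have hsymm : Bminus α 1 0 = Bminus α 0 1 := rfl
  simp only [dotProduct, Matrix.mulVec, Fin.sum_univ_two, hsymm]
  ring

lemma le_integral_energyForm (hα₁ : -1 < α) (hα₂ : α ≤ 0) (hH : Continuous H)
    (hmean : ∫ ω : sphere (0 : E3) 1, H ω *ᵥ (ω : E3).ofLp ∂sphMeas = 0) {w : Fin 2 → ℝ}
    (hw₀ : w 0 = √(4 * π * (a ⬝ᵥ a))) (hw₁ : w 1 = √(∫ ω, ‖H ω‖ ^ 2 ∂sphMeas)) :
    w ⬝ᵥ Bminus α *ᵥ w ≤ ∫ ω : sphere (0 : E3) 1,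
      energyForm α (Matrix.vecMulVec a (ω : E3).ofLp + H ω) (ω : E3).ofLp ∂sphMeas := by
  have hint {F : Type} [NormedAddCommGroup F] {f : sphere (0 : E3) 1 → F} (hf : Continuous f) :
      Integrable f sphMeas := integrable_sphere hf
  have hcross : ∫ ω : sphere (0 : E3) 1, a ⬝ᵥ H ω *ᵥ (ω : E3).ofLp ∂sphMeas = 0 := by
    rw [integral_const_dotProduct a (hint (by fun_prop)), hmean, dotProduct_zero]
  have hw₀_sq : w 0 ^ 2 = 4 * π * (a ⬝ᵥ a) := by
    have ha : 0 ≤ a ⬝ᵥ a := dotProduct_star_self_nonneg a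
    rw [hw₀, sq_sqrt (by positivity)]
  have hw₁_sq : w 1 ^ 2 = ∫ ω, ‖H ω‖ ^ 2 ∂sphMeas := by
    rw [hw₁, sq_sqrt (integral_nonneg fun _ => sq_nonneg _)]
  have hcs := integral_abs_dotProduct_mul_norm_le a hH
  rw [← hw₀, ← hw₁] at hcs
  calc w ⬝ᵥ Bminus α *ᵥ w
      = Bminus α 0 0 * w 0 ^ 2 + 2 * Bminus α 0 1 * (w 0 * w 1) + Bminus α 1 1 * w 1 ^ 2 :=
        dotProduct_Bminus_mulVec_self w
    _ ≤ ∫ ω : sphere (0 : E3) 1, (a ⬝ᵥ a + 2 * (a ⬝ᵥ H ω *ᵥ (ω : E3).ofLp)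
          + 3 * (Bminus α 0 0 - 1) * (a ⬝ᵥ (ω : E3).ofLp) ^ 2
          + 2 * √3 * Bminus α 0 1 * (|a ⬝ᵥ (ω : E3).ofLp| * ‖H ω‖)
          + Bminus α 1 1 * ‖H ω‖ ^ 2) ∂sphMeas := by
        rw [integral_add (hint (by fun_prop)) (hint (by fun_prop)),
          integral_add (hint (by fun_prop)) (hint (by fun_prop)),
          integral_add (hint (by fun_prop)) (hint (by fun_prop)),
          integral_add (hint (by fun_prop)) (hint (by fun_prop))]
        simp only [integral_const_mul, integral_const, sphMeas_real_univ, smul_eq_mul, hcross,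
          integral_sphMeas_dotProduct_sq, ← hw₁_sq, hw₀_sq]
        linarith [mul_le_mul_of_nonpos_left hcs (Bminus_zero_one_nonpos hα₁ hα₂)]
    _ ≤ _ := integral_mono (hint (by fun_prop)) (hint (by fun_prop)) fun ω =>
        le_energyForm_vecMulVec_add hα₁ hα₂ a (H ω) (norm_eq_of_mem_sphere ω)

end SphereInequality

/-! ### Radial derivatives of spherical means -/

section SphericalMeans

lemma hasDerivAt_integral_sphere_smul {E F : Type*} [NormedAddCommGroup E] [NormedSpace ℝ E]
    [FiniteDimensional ℝ E] [MeasurableSpace E] [BorelSpace E] [NormedAddCommGroup F]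
    [NormedSpace ℝ F] {μ : Measure E} [μ.IsAddHaarMeasure] {f : E → F} (hf : ContDiff ℝ 1 f)
    (r : ℝ) :
    HasDerivAt (fun s : ℝ => ∫ ω : sphere (0 : E) 1, f (s • (ω : E)) ∂μ.toSphere)
      (∫ ω : sphere (0 : E) 1, fderiv ℝ f (r • (ω : E)) ω ∂μ.toSphere) r := by
  have hfc : Continuous f := hf.continuous
  obtain ⟨C, hC⟩ := ((isCompact_closedBall r 1).prod (isCompact_sphere (0 : E) 1)).bddAbove_image
    (f := fun p : ℝ × E => ‖fderiv ℝ f (p.1 • p.2) p.2‖) (by fun_prop)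
  refine (hasDerivAt_integral_of_dominated_loc_of_deriv_le
    (F := fun s (ω : sphere (0 : E) 1) => f (s • (ω : E)))
    (F' := fun s (ω : sphere (0 : E) 1) => fderiv ℝ f (s • (ω : E)) ω) (bound := fun _ => C)
    (closedBall_mem_nhds r one_pos)
    (.of_forall fun s => (integrable_sphere (by fun_prop)).aestronglyMeasurable)
    (integrable_sphere (by fun_prop)) (integrable_sphere (by fun_prop)).aestronglyMeasurable
    (.of_forall fun ω s hs => hC ⟨(s, ω), ⟨hs, ω.2⟩, rfl⟩) (integrable_const C)
    (.of_forall fun ω s _ => ?_)).2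
  have hline : HasDerivAt (fun t : ℝ => t • (ω : E)) (ω : E) s := by
    simpa using (hasDerivAt_id s).smul_const (ω : E)
  exact ((hf.differentiable one_ne_zero _).hasFDerivAt).comp_hasDerivAt s hline

variable {α : ℝ} {u v : E3 → Fin 3 → ℝ} {ub : Fin 3 → ℝ → ℝ} {x : E3}

lemma fderiv_apply_eq_jac_mulVec (hu : DifferentiableAt ℝ u x) (y : E3) :
    fderiv ℝ u x y = jac u x *ᵥ y.ofLp := by
  ext i
  have hy : y = ∑ k, y k • EuclideanSpace.single k (1 : ℝ) := by
    simpa using (EuclideanSpace.basisFun (Fin 3) ℝ).sum_repr y |>.symm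
  conv_lhs => rw [hy]
  simp [fderiv_apply hu, jac, pd, Matrix.mulVec, dotProduct, mul_comm]

/-- The radial derivative of the spherical mean of `u`. -/
def meanDeriv (u : E3 → Fin 3 → ℝ) (r : ℝ) : Fin 3 → ℝ :=
  (4 * π)⁻¹ • ∫ ω : sphere (0 : E3) 1, jac u (r • (ω : E3)) *ᵥ (ω : E3).ofLp ∂sphMeas

lemma hasDerivAt_sphericalMean (hu : ContDiff ℝ 1 u) (hdec : IsSphericalMeanDecomp u ub v)
    (i : Fin 3) (r : ℝ) : HasDerivAt (ub i) (meanDeriv u r i) r := by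
  have huc : Continuous u := hu.continuous
  have hmean : ub i = fun s =>
      ((4 * π)⁻¹ • ∫ ω : sphere (0 : E3) 1, u (s • (ω : E3)) ∂volume.toSphere) i := by
    ext s
    rw [hdec.1, one_div, sphInt, sphMeas, Pi.smul_apply, smul_eq_mul, eval_integral fun j =>
      integrable_sphere (f := fun ω : sphere (0 : E3) 1 => u (s • (ω : E3)) j) (by fun_prop)]
  have hderiv := hasDerivAt_integral_sphere_smul (μ := volume) hu r
  simp only [fderiv_apply_eq_jac_mulVec (hu.differentiable one_ne_zero _)] at hderiv
  rw [hmean]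
  exact hasDerivAt_pi.1 (hderiv.const_smul (4 * π)⁻¹) i

/-- The Jacobian matrix at `rω` of the deviation of `u` from its spherical mean, written so that it
is continuous also at `r = 0`. -/
def jacDeviation (u : E3 → Fin 3 → ℝ) (r : ℝ) (ω : E3) : Matrix (Fin 3) (Fin 3) ℝ :=
  jac u (r • ω) - Matrix.vecMulVec (meanDeriv u r) ω.ofLp

lemma jac_eq_jacDeviation (hu : ContDiff ℝ 1 u) (hdec : IsSphericalMeanDecomp u ub v) {r : ℝ}
    (hr : 0 < r) (ω : sphere (0 : E3) 1) : jac v (r • (ω : E3)) = jacDeviation u r ω := by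
  ext i k
  have hnorm : ‖r • (ω : E3)‖ = r := by simp [norm_smul, hr.le]
  have hx : r • (ω : E3) ≠ 0 := norm_ne_zero_iff.1 (hnorm.trans_ne hr.ne')
  have hub := hasDerivAt_sphericalMean hu hdec i ‖r • (ω : E3)‖
  have hcomp : DifferentiableAt ℝ (fun z : E3 => ub i ‖z‖) (r • (ω : E3)) :=
    hub.differentiableAt.comp _ (differentiableAt_id.norm ℝ hx)
  have hv : (fun z => v z i) = fun z => u z i - ub i ‖z‖ := by
    ext z
    rw [hdec.2, add_sub_cancel_left]
  have hpd : pd k (fun z => ub i ‖z‖) (r • (ω : E3)) = meanDeriv u r i * (ω : E3) k := by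
    rw [pd, fderiv_comp_norm_apply hub.differentiableAt hx, hub.deriv, hnorm]
    simp [inner_smul_left, EuclideanSpace.inner_single_right, hr.ne']
  simp only [jac, jacDeviation, Matrix.of_apply, Matrix.sub_apply, Matrix.vecMulVec_apply]
  rw [hv, pd_sub k (differentiableAt_pi.1 (hu.differentiable one_ne_zero _) i)
    hcomp, hpd]

lemma continuous_meanDeriv (hu : ContDiff ℝ 1 u) : Continuous (meanDeriv u) := by
  have hjac := continuous_jac hu
  exact (continuous_integral_sphere (μ := volume)
    (f := fun (r : ℝ) (y : E3) => jac u (r • y) *ᵥ y.ofLp) (by fun_prop)).const_smul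
      (4 * π)⁻¹

lemma continuous_jacDeviation (hu : ContDiff ℝ 1 u) :
    Continuous fun p : ℝ × E3 => jacDeviation u p.1 p.2 := by
  have hjac := continuous_jac hu
  have hmean := continuous_meanDeriv hu
  unfold jacDeviation
  fun_prop

lemma integral_jacDeviation_mulVec (hu : ContDiff ℝ 1 u) (r : ℝ) :
    ∫ ω : sphere (0 : E3) 1, jacDeviation u r ω *ᵥ (ω : E3).ofLp ∂sphMeas = 0 := by
  have hjac := continuous_jac hu
  have hint : Integrable
      (fun ω : sphere (0 : E3) 1 => jac u (r • (ω : E3)) *ᵥ (ω : E3).ofLp) sphMeas :=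
    integrable_sphere (by fun_prop)
  have hsplit (ω : sphere (0 : E3) 1) : jacDeviation u r ω *ᵥ (ω : E3).ofLp =
      jac u (r • (ω : E3)) *ᵥ (ω : E3).ofLp - meanDeriv u r := by
    simp [jacDeviation, Matrix.sub_mulVec, Matrix.vecMulVec_mulVec, dotProduct_ofLp_self]
  simp only [hsplit]
  rw [integral_sub hint (integrable_const _), integral_const, sphMeas_real_univ, meanDeriv,
    smul_inv_smul₀ (by positivity), sub_self]

open scoped Matrix.Norms.Frobenius

/-- The vector `(‖D_r ū‖_ω, ‖Dv‖_ω)` at radius `r > 0`, expressed through the Jacobian matrix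
of `u`. -/
def radialNorms (u : E3 → Fin 3 → ℝ) (r : ℝ) : Fin 2 → ℝ :=
  ![√(4 * π * (meanDeriv u r ⬝ᵥ meanDeriv u r)),
    √(∫ ω : sphere (0 : E3) 1, ‖jacDeviation u r ω‖ ^ 2 ∂sphMeas)]

lemma continuous_radialNorms (hu : ContDiff ℝ 1 u) : Continuous (radialNorms u) := by
  have hmean := continuous_meanDeriv hu
  have hdev := continuous_jacDeviation hu
  have hint : Continuous fun r =>
      ∫ ω : sphere (0 : E3) 1, ‖jacDeviation u r ω‖ ^ 2 ∂sphMeas :=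
    continuous_integral_sphere (μ := volume)
      (f := fun (r : ℝ) (y : E3) => ‖jacDeviation u r y‖ ^ 2) (hdev.norm.pow 2)
  unfold radialNorms
  fun_prop

lemma hasCompactSupport_radialNorms (hs : HasCompactSupport u) :
    HasCompactSupport (radialNorms u) := by
  obtain ⟨R, hR⟩ := hs.isBounded.subset_closedBall 0
  refine .intro (isCompact_closedBall (0 : ℝ) R) fun r hr => ?_
  have hjac (ω : sphere (0 : E3) 1) : jac u (r • (ω : E3)) = 0 :=
    jac_of_notMem_tsupport fun h => hr (by simpa [norm_smul] using hR h)
  have hmean : meanDeriv u r = 0 := by simp [meanDeriv, hjac]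
  ext i
  fin_cases i <;> simp [radialNorms, jacDeviation, hmean, hjac]

lemma integrable_mul_radialNorms_dotProduct (B : Matrix (Fin 2) (Fin 2) ℝ) (hu : ContDiff ℝ 1 u)
    (hs : HasCompactSupport u) :
    Integrable fun r => r * (radialNorms u r ⬝ᵥ B *ᵥ radialNorms u r) := by
  have hcont := continuous_radialNorms hu
  refine Continuous.integrable_of_hasCompactSupport (by fun_prop) ?_
  exact ((hasCompactSupport_radialNorms hs).comp_left
    (g := fun w => w ⬝ᵥ B *ᵥ w) (zero_dotProduct _)).mul_left

lemma eq_radialNorms (hu : ContDiff ℝ 1 u) (hdec : IsSphericalMeanDecomp u ub v) {r : ℝ}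
    (hr : 0 < r) {w : Fin 2 → ℝ} (hw₀ : w 0 = √(4 * π * ∑ i, deriv (ub i) r ^ 2))
    (hw₁ : w 1 = √(sphInt (fun x => ∑ i, ∑ k, pd k (fun z => v z i) x ^ 2) r)) :
    w = radialNorms u r := by
  have hjac (ω : sphere (0 : E3) 1) :
      ∑ i, ∑ k, pd k (fun z => v z i) (r • (ω : E3)) ^ 2 = ‖jacDeviation u r ω‖ ^ 2 := by
    rw [← jac_eq_jacDeviation hu hdec hr, frobenius_norm_sq]
    rfl
  ext i
  fin_cases i
  · simp [hw₀, radialNorms, (hasDerivAt_sphericalMean hu hdec _ r).deriv, dotProduct, sq]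
  · simp [hw₁, radialNorms, sphInt, hjac]

lemma radialNorms_dotProduct_le_sphericalEnergy (hα₁ : -1 < α) (hα₂ : α ≤ 0)
    (hu : ContDiff ℝ 1 u) (r : ℝ) :
    radialNorms u r ⬝ᵥ Bminus α *ᵥ radialNorms u r ≤ sphericalEnergy α u r := by
  have hdev := continuous_jacDeviation hu
  have h := le_integral_energyForm (H := fun ω => jacDeviation u r ω) (w := radialNorms u r)
    hα₁ hα₂ (by fun_prop) (integral_jacDeviation_mulVec hu r) rfl rfl
  simpa only [sphericalEnergy, jacDeviation, add_sub_cancel] using h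

end SphericalMeans

theorem lame_energy_lower_bound_Bminus_general
    {α : ℝ} (hα₁ : -1 < α) (hα₂ : α ≤ 0)
    {u : E3 → Fin 3 → ℝ} (hu : ContDiff ℝ 2 u) (hs : HasCompactSupport u)
    {ub : Fin 3 → ℝ → ℝ} {v : E3 → Fin 3 → ℝ} (hdec : IsSphericalMeanDecomp u ub v)
    {w : ℝ → Fin 2 → ℝ} (hw₀ : ∀ r, 0 < r → w r 0 = √(4 * π * ∑ i, deriv (ub i) r ^ 2))
    (hw₁ : ∀ r, 0 < r →
      w r 1 = √(sphInt (fun x => ∑ i, ∑ k, pd k (fun z => v z i) x ^ 2) r)) :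
    1 / 2 * ∑ i, u 0 i ^ 2 +
        cA α * ∫ r in Set.Ioi (0 : ℝ), r * ∑ i, ∑ j, w r i * Bminus α i j * w r j ≤
      ∫ x : E3, ∑ i, ∑ j, lame α u x i * Phi α x i j * u x j := by
  have hu₁ : ContDiff ℝ 1 u := hu.of_le one_le_two
  have hform : ∀ r ∈ Set.Ioi (0 : ℝ), r * ∑ i, ∑ j, w r i * Bminus α i j * w r j =
      r * (radialNorms u r ⬝ᵥ Bminus α *ᵥ radialNorms u r) := fun r hr => by
    rw [← eq_radialNorms hu₁ hdec hr (hw₀ r hr) (hw₁ r hr)]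
    simp only [dotProduct, Matrix.mulVec, Finset.mul_sum, mul_assoc]
  have hsq : ∑ i, u 0 i ^ 2 = u 0 ⬝ᵥ u 0 := by simp only [dotProduct, sq]
  rw [integral_lame_mul_Phi_mul hα₁ hu hs, setIntegral_congr_fun measurableSet_Ioi hform, hsq]
  refine add_le_add_right (mul_le_mul_of_nonneg_left ?_ (cA_nonneg hα₁)) _
  refine setIntegral_mono_on (integrable_mul_radialNorms_dotProduct _ hu₁ hs).integrableOn
    (integrableOn_mul_sphericalEnergy α hu₁ hs) measurableSet_Ioi fun r hr => ?_
  exact mul_le_mul_of_nonneg_left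
    (radialNorms_dotProduct_le_sphericalEnergy hα₁ hα₂ hu₁ r) hr.out.le

/-- For `-1 < α < 0`, the lower bound
`∫ (Lu)·(Φu) dx ≥ (1/2)|u(0)|² + c_α ∫₀^∞ r (wᵀ B₋ w) dr`, where
`w = (‖D_r ū‖_ω, ‖Dv‖_ω)`. -/
theorem lame_energy_lower_bound_Bminus
    (α : ℝ) (hα₁ : -1 < α) (hα₂ : α < 0)
    (u : E3 → Fin 3 → ℝ) (hu : IsTestOn Set.univ u)
    (ub : Fin 3 → ℝ → ℝ) (v : E3 → Fin 3 → ℝ)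
    (hdec : IsSphericalMeanDecomp u ub v)
    (w : ℝ → Fin 2 → ℝ)
    (hw0 : ∀ r, w r 0 = Real.sqrt (4 * Real.pi * ∑ i, (deriv (ub i) r) ^ 2))
    (hw1 : ∀ r, w r 1 =
      Real.sqrt (sphInt (fun x => ∑ i, ∑ k, (pd k (fun z => v z i) x) ^ 2) r)) :
    (1 / 2) * (∑ i, (u 0 i) ^ 2) +
        cA α * ∫ r in Set.Ioi (0 : ℝ), r * ∑ i, ∑ j, w r i * Bminus α i j * w r j ≤
      ∫ x : E3, ∑ i, ∑ j, lame α u x i * Phi α x i j * u x j :=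
  lame_energy_lower_bound_Bminus_general hα₁ hα₂.le (contDiff_infty.1 hu.1 2) hu.2.1
    hdec (fun r _ => hw0 r) fun r _ => hw1 r
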